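/- arXiv:2408.14182 — 2 statements merged into one kernel-verified Lean document; each statement's English description precedes it below -/
import Mathlib

section
/- For every integer n ≥ 311, one has B_n ≤ E_n. -/
/-- Principal branch of the Lambert W function on `[0, ∞)`: for `x ≥ 0`,
`lambertW x` is the unique `y ≥ 0` with `y * exp y = x`. -/
noncomputable def lambertW (x : ℝ) : ℝ := Function.invFun (fun y : ℝ => y * Real.exp y) x

/-- Bell numbers: `Bell 0 = 1` and `Bell (n+1) = ∑_{k=0}^{n} C(n,k) * Bell k`. -/
def Bell : ℕ → ℕ
  | 0 => 1
  | n + 1 => ∑ k ∈ (Finset.range (n + 1)).attach, (n.choose k.1) * Bell k.1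
decreasing_by exact Finset.mem_range.mp k.2

/-- `E n = n! * exp(e^R - 1) / (R^n * sqrt(2π(n+1)(R+1)))` with `R = W(n+1)`. -/
noncomputable def E (n : ℕ) : ℝ :=
  (Nat.factorial n : ℝ) * Real.exp (Real.exp (lambertW (n + 1)) - 1) /
    ((lambertW (n + 1)) ^ n * Real.sqrt (2 * Real.pi * (n + 1) * (lambertW (n + 1) + 1)))

/-- strict evaluation helper -/
def bnForce {α : Type} (m : ℕ) (k : ℕ → α) : α :=
  Nat.rec (motive := fun _ => α) (k 0) (fun p _ => k (Nat.succ p)) m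

/-- one pass of the Bell triangle -/
def bnScan (ys : List ℕ) : ℕ → List ℕ → List ℕ :=
  List.rec (motive := fun _ => ℕ → List ℕ → List ℕ) (fun x acc => x :: acc)
    (fun y _ ih x acc => bnForce (Nat.add x y) (fun s => ih s (x :: acc))) ys

/-- next reversed row of the Bell triangle -/
def bnStep (q : List ℕ) : List ℕ := bnScan q.reverse (q.headD 0) []

/-- the last entry of a reversed stored row -/
def bnRow (n : ℕ) : List ℕ := Nat.rec (motive := fun _ => List ℕ) [1] (fun _ q => bnStep q) n

/-- scaled Taylor sums of exp -/
def bnS (a b : ℕ) (M : ℕ) : ℕ :=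
  Nat.rec (motive := fun _ => ℕ) 0 (fun m s => s * b * (m + 1) + a ^ m * b * (m + 1)) M

/-- the check at `n`, with `B = Bell n`, `f = n!` and a certificate `U` -/
def bnChk (n B f U : ℕ) : Bool :=
  Nat.ble 1000000000000 U && (
  Nat.ble U 7000000000000 && (
  Nat.ble (U * (bnS U 8000000000000 16 * 16 + U ^ 16 * 17) ^ 8)
    ((n + 1) * 1000000000000 * (8000000000000 ^ 16 * 20922789888000 * 16) ^ 8) &&
  bnForce ((2 ^ 60 * bnS (U * U + 1000000000000 * 1000000000000) (8 * U * 1000000000000) 16 ^ 8) /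
      ((8 * U * 1000000000000) ^ 16 * 20922789888000) ^ 8) (fun V =>
    Nat.ble (B * B * (n + 1) ^ (2 * (n + 1)) * 2 * 314159265359 * (n + 1) * (U + 1000000000000)
        * 27182818286 ^ 2 * 1000000000000 * 2 ^ (60 * (2 * (n + 1))))
      (f * f * U * U * V ^ (2 * (n + 1)) * 10 ^ 31))))

/-- run over all certificates; `q` is reversed row `n - 1`, `f = n!` -/
def bnLoop (us : List ℕ) : ℕ → ℕ → List ℕ → Bool :=
  List.rec (motive := fun _ => ℕ → ℕ → List ℕ → Bool) (fun _ _ _ => true)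
    (fun U _ ih n f q => bnChk n (q.headD 0) f U &&
       bnForce (f * (n + 1)) (fun g => ih (n + 1) g (bnStep q))) us

def bnCerts : List ℕ := [
4287337319103, 4289932250215, 4292519199359, 4295098216105, 4297669349559, 4300232648369, 
4302788160734, 4305335934405, 4307876016696, 4310408454483, 4312933294213, 4315450581911, 
4317960363181, 4320462683213, 4322957586789, 4325445118286, 4327925321683, 4330398240563, 
4332863918122, 4335322397167, 4337773720129, 4340217929059, 4342655065640, 4345085171185, 
4347508286646, 4349924452617, 4352333709334, 4354736096687, 4357131654218, 4359520421126, 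
4361902436274, 4364277738188, 4366646365066, 4369008354777, 4371363744869, 4373712572569, 
4376054874790, 4378390688131, 4380720048884, 4383042993034, 4385359556267, 4387669773968, 
4389973681228, 4392271312848, 4394562703337, 4396847886921, 4399126897543, 4401399768868, 
4403666534283, 4405927226905, 4408181879578, 4410430524881, 4412673195127, 4414909922369, 
4417140738400, 4419365674761, 4421584762735, 4423798033358, 4426005517417, 4428207245456, 
4430403247773, 4432593554429, 4434778195248, 4436957199818, 4439130597494, 4441298417403, 
4443460688442, 4445617439286, 4447768698386, 4449914493971, 4452054854053, 4454189806428, 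
4456319378680, 4458443598178, 4460562492083, 4462676087351, 4464784410731, 4466887488767, 
4468985347806, 4471078013994, 4473165513279, 4475247871415, 4477325113965, 4479397266298, 
4481464353594, 4483526400848, 4485583432867, 4487635474277, 4489682549519, 4491724682857, 
4493761898374, 4495794219980, 4497821671406, 4499844276214, 4501862057792, 4503875039359, 
4505883243966, 4507886694498, 4509885413674, 4511879424050, 4513868748022, 4515853407824, 
4517833425531, 4519808823063, 4521779622183, 4523745844499, 4525707511469, 4527664644397, 
4529617264438, 4531565392599, 4533509049741, 4535448256576, 4537383033675, 4539313401465, 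
4541239380231, 4543160990117, 4545078251130, 4546991183137, 4548899805870, 4550804138926, 
4552704201766, 4554600013721, 4556491593987, 4558378961633, 4560262135598, 4562141134690, 
4564015977595, 4565886682868, 4567753268945, 4569615754133, 4571474156621, 4573328494475, 
4575178785639, 4577025047942, 4578867299090, 4580705556676, 4582539838174, 4584370160947, 
4586196542238, 4588018999183, 4589837548803, 4591652208008, 4593462993598, 4595269922264, 
4597073010590, 4598872275052, 4600667732019, 4602459397754, 4604247288419]

/-! ### The Lambert function -/

lemma lw_spec (n : ℕ) : lambertW (n + 1) * Real.exp (lambertW (n + 1)) = n + 1 := by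
  have hex : ∃ y : ℝ, (fun y : ℝ => y * Real.exp y) y = (n : ℝ) + 1 := by
    have hc : ContinuousOn (fun y : ℝ => y * Real.exp y) (Set.Icc 0 ((n : ℝ) + 1)) := by fun_prop
    have h0 : (0 : ℝ) ≤ (n : ℝ) + 1 := by positivity
    have := intermediate_value_Icc h0 hc
    have hm : (n : ℝ) + 1 ∈ Set.Icc ((fun y : ℝ => y * Real.exp y) 0)
        ((fun y : ℝ => y * Real.exp y) ((n : ℝ) + 1)) := by
      constructor
      · simp; positivity
      · have : 1 ≤ Real.exp ((n : ℝ) + 1) := Real.one_le_exp h0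
        show (n : ℝ) + 1 ≤ ((n : ℝ) + 1) * Real.exp ((n : ℝ) + 1)
        nlinarith
    obtain ⟨y, _, hy⟩ := this hm
    exact ⟨y, hy⟩
  exact Function.invFun_eq hex

lemma lw_pos (n : ℕ) : 0 < lambertW (n + 1) := by
  have h := lw_spec n
  by_contra hc
  push Not at hc
  have : lambertW (n + 1) * Real.exp (lambertW (n + 1)) ≤ 0 :=
    mul_nonpos_of_nonpos_of_nonneg hc (Real.exp_pos _).le
  have h2 : (0 : ℝ) < (n : ℝ) + 1 := by positivity
  linarith

lemma lw_ge (n : ℕ) (u : ℝ) (hu : 0 ≤ u) (h : u * Real.exp u ≤ n + 1) : u ≤ lambertW (n + 1) := by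
  by_contra hc
  push Not at hc
  have h1 := lw_spec n
  have h2 := lw_pos n
  have : lambertW (n + 1) * Real.exp (lambertW (n + 1)) < u * Real.exp u := by
    have := Real.exp_lt_exp.mpr hc
    have := Real.exp_pos (lambertW (n + 1))
    nlinarith
  linarith

lemma E_form (n : ℕ) (R N : ℝ) (hR : R = lambertW (n + 1)) (hN : N = n + 1) :
    E n = (n.factorial : ℝ) / N ^ (n + 1) * Real.exp (N * (R + 1 / R) - 1) *
      (R / Real.sqrt (2 * Real.pi * N * (R + 1))) := by
  have h1 := lw_spec n
  have h2 := lw_pos n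
  rw [← hR, ← hN] at h1
  rw [← hR] at h2
  have hN0 : 0 < N := by rw [hN]; positivity
  unfold E
  rw [← hR, ← hN]
  have e1 : Real.exp R = N / R := by field_simp; linarith
  have e2 : Real.exp (N * (R + 1 / R) - 1) = Real.exp (Real.exp R - 1) * (Real.exp R) ^ (n + 1) := by
    rw [← Real.exp_nat_mul, ← Real.exp_add, e1]
    congr 1
    push_cast
    rw [← hN]
    ring
  rw [e2]
  have e3 : (Real.exp R) ^ (n + 1) = N ^ (n + 1) / R ^ (n + 1) := by rw [e1, div_pow]
  rw [e3]
  have hs : 0 < Real.sqrt (2 * Real.pi * N * (R + 1)) := by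
    apply Real.sqrt_pos.mpr; positivity
  field_simp
  ring

lemma E_lower (n : ℕ) (u N : ℝ) (hN : N = n + 1) (hu1 : 1 ≤ u) (hu : u * Real.exp u ≤ n + 1) :
    (n.factorial : ℝ) / N ^ (n + 1) * Real.exp (N * (u + 1 / u) - 1) *
      (u / Real.sqrt (2 * Real.pi * N * (u + 1))) ≤ E n := by
  have hle := lw_ge n u (by linarith) hu
  rw [E_form n _ N rfl hN]
  set R := lambertW (n + 1)
  have hN0 : 0 < N := by rw [hN]; positivity
  have hR1 : 1 ≤ R := by linarith
  have hs : 0 < 2 * Real.pi * N * (u + 1) := by positivity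
  have hs2 : 0 < 2 * Real.pi * N * (R + 1) := by positivity
  have k1 : u + 1 / u ≤ R + 1 / R := by
    have : R + 1 / R - (u + 1 / u) = (R - u) * (R * u - 1) / (R * u) := by field_simp; ring
    have h3 : 0 ≤ (R - u) * (R * u - 1) / (R * u) := by
      apply div_nonneg
      · apply mul_nonneg (by linarith); nlinarith
      · positivity
    linarith
  have k2 : u / Real.sqrt (2 * Real.pi * N * (u + 1)) ≤ R / Real.sqrt (2 * Real.pi * N * (R + 1)) := by
    rw [div_le_div_iff₀ (Real.sqrt_pos.mpr hs) (Real.sqrt_pos.mpr hs2)]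
    apply le_of_sq_le_sq _ (by positivity)
    rw [mul_pow, mul_pow, Real.sq_sqrt hs.le, Real.sq_sqrt hs2.le]
    have : u ^ 2 * (R + 1) ≤ R ^ 2 * (u + 1) := by nlinarith [mul_nonneg (sub_nonneg.mpr hle) (by positivity : 0 ≤ R * u)]
    have hp : 0 ≤ 2 * Real.pi * N := by positivity
    nlinarith [mul_le_mul_of_nonneg_left this hp]
  gcongr

/-! ### Bell triangle -/

lemma Bell_succ (n : ℕ) : Bell (n + 1) = ∑ k ∈ Finset.range (n + 1), n.choose k * Bell k := by
  rw [Bell]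
  exact Finset.sum_attach (Finset.range (n + 1)) (fun k => n.choose k * Bell k)

def bnT : ℕ → ℕ → ℕ
  | 0, m => Bell m
  | k + 1, m => bnT k m + bnT k (m + 1)

lemma bnT_eq (k : ℕ) : ∀ m, bnT k m = ∑ i ∈ Finset.range (k + 1), k.choose i * Bell (m + i) := by
  induction k with
  | zero => intro m; simp [bnT]
  | succ k ih =>
    intro m
    rw [bnT, ih, ih]
    rw [Finset.sum_range_succ' _ (k + 1)]
    simp only [Nat.choose_succ_succ, add_mul, Finset.sum_add_distrib]
    rw [Finset.sum_range_succ (fun i => k.choose (i + 1) * Bell (m + (i + 1))),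
      Finset.sum_range_succ' (fun i => k.choose i * Bell (m + i))]
    have : ∀ i, m + 1 + i = m + (i + 1) := fun i => by ring
    simp only [this]
    simp
    ring

lemma bnT_zero (n : ℕ) : bnT n 0 = Bell (n + 1) := by
  rw [bnT_eq, Bell_succ]; simp

lemma bnForce_eq {α : Type} (m : ℕ) (k : ℕ → α) : bnForce m k = k m := by
  cases m <;> rfl

lemma bnScan_nil (x : ℕ) (acc : List ℕ) : bnScan [] x acc = x :: acc := rfl

lemma bnScan_cons (y : ℕ) (ys : List ℕ) (x : ℕ) (acc : List ℕ) :
    bnScan (y :: ys) x acc = bnScan ys (x + y) (x :: acc) := by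
  show bnForce (Nat.add x y) (fun s => bnScan ys s (x :: acc)) = _
  rw [bnForce_eq]; rfl

lemma bnScan_spec (n j : ℕ) : ∀ (k : ℕ) (acc : List ℕ), k + j = n + 1 →
    bnScan ((List.range' k j).map (fun k => bnT k (n - k))) (bnT k (n + 1 - k)) acc =
      ((List.range' k (j + 1)).map (fun k => bnT k (n + 1 - k))).reverse ++ acc := by
  induction j with
  | zero => intro k acc h; simp [bnScan_nil]
  | succ j ih =>
    intro k acc h
    rw [List.range'_succ, List.map_cons, bnScan_cons]
    have h1 : bnT k (n + 1 - k) + bnT k (n - k) = bnT (k + 1) (n + 1 - (k + 1)) := by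
      rw [bnT]
      have e1 : n + 1 - (k + 1) = n - k := by omega
      have e2 : n + 1 - k = n - k + 1 := by omega
      rw [e1, e2]; ring
    rw [h1, ih (k + 1) _ (by omega)]
    rw [List.range'_succ (s := k) (n := j + 1)]
    simp

def bnRowSpec (n : ℕ) : List ℕ := ((List.range' 0 (n + 1)).map (fun k => bnT k (n - k))).reverse

lemma bnRowSpec_head (n : ℕ) : (bnRowSpec n).headD 0 = Bell (n + 1) := by
  unfold bnRowSpec
  rw [List.range'_concat]
  simp [bnT_zero]

lemma bnStep_spec (n : ℕ) : bnStep (bnRowSpec n) = bnRowSpec (n + 1) := by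
  unfold bnStep
  rw [bnRowSpec_head]
  have h := bnScan_spec n (n + 1) 0 [] (by omega)
  unfold bnRowSpec
  rw [List.reverse_reverse]
  simpa [bnT] using h

lemma bnRow_spec (n : ℕ) : bnRow n = bnRowSpec n := by
  induction n with
  | zero => simp [bnRow, bnRowSpec, bnT, Bell]
  | succ n ih =>
    show bnStep (bnRow n) = _
    rw [ih, bnStep_spec]

lemma bnLoop_cons (U : ℕ) (us : List ℕ) (n f : ℕ) (q : List ℕ) :
    bnLoop (U :: us) n f q = (bnChk n (q.headD 0) f U && bnLoop us (n + 1) (f * (n + 1)) (bnStep q)) := by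
  show (_ && bnForce (f * (n + 1)) (fun g => bnLoop us (n + 1) g (bnStep q))) = _
  rw [bnForce_eq]

lemma bnLoop_spec (us : List ℕ) : ∀ (n : ℕ),
    bnLoop us (n + 1) (n + 1).factorial (bnRowSpec n) = true →
    ∀ i, i < us.length → ∃ U, bnChk (n + 1 + i) (Bell (n + 1 + i)) (n + 1 + i).factorial U = true := by
  induction us with
  | nil => intro n _ i hi; simp at hi
  | cons U us ih =>
    intro n h i hi
    rw [bnLoop_cons, Bool.and_eq_true, bnRowSpec_head, bnStep_spec] at h
    rcases i with _ | i
    · exact ⟨U, h.1⟩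
    · have h2 := ih (n + 1) (by rw [Nat.factorial_succ (n + 1), mul_comm]; exact h.2) i (by simpa using hi)
      have e : n + 1 + (i + 1) = n + 1 + 1 + i := by ring
      rw [e]; exact h2

/-! ### Correctness of the numerical check -/

lemma bnS_spec (a b : ℕ) (hb : 0 < b) (M : ℕ) :
    (bnS a b M : ℝ) = (b : ℝ) ^ M * M.factorial *
      ∑ m ∈ Finset.range M, ((a : ℝ) / b) ^ m / m.factorial := by
  induction M with
  | zero => simp [bnS]
  | succ M ih =>
    have : bnS a b (M + 1) = bnS a b M * b * (M + 1) + a ^ M * b * (M + 1) := rfl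
    rw [this, Finset.sum_range_succ, Nat.factorial_succ]
    push_cast
    rw [ih]
    have hb' : (b : ℝ) ≠ 0 := by positivity
    have hf : (M.factorial : ℝ) ≠ 0 := by positivity
    rw [div_pow]
    field_simp
    ring

lemma exp_upper_chk (n U D D8 F : ℕ) (hD : 0 < D) (hD8 : D8 = 8 * D) (hU : U ≤ 7 * D)
    (hF : F = Nat.factorial 16)
    (h : U * (bnS U D8 16 * 16 + U ^ 16 * 17) ^ 8 ≤ (n + 1) * D * (D8 ^ 16 * F * 16) ^ 8) :
    ((U : ℝ) / D) * Real.exp ((U : ℝ) / D) ≤ n + 1 := by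
  have hD8p : 0 < D8 := by omega
  have hDr : (0 : ℝ) < D := by exact_mod_cast hD
  have hD8r : (0 : ℝ) < D8 := by exact_mod_cast hD8p
  have hUr : (U : ℝ) ≤ 7 * D := by exact_mod_cast hU
  have hD8e : (D8 : ℝ) = 8 * D := by rw [hD8]; push_cast; ring
  have hFr : (0 : ℝ) < (F : ℝ) := by rw [hF]; positivity
  have h' : (U : ℝ) * ((bnS U D8 16 : ℝ) * 16 + (U : ℝ) ^ 16 * 17) ^ 8 ≤
      ((n : ℝ) + 1) * D * ((D8 : ℝ) ^ 16 * F * 16) ^ 8 := by exact_mod_cast h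
  have hx1 : (U : ℝ) / D8 ≤ 1 := by
    rw [div_le_one hD8r, hD8e]; linarith
  have hb := Real.exp_bound' (x := (U : ℝ) / D8) (by positivity) hx1 (n := 16) (by norm_num)
  have hs := bnS_spec U D8 hD8p 16
  rw [← hF] at hs
  have hb2 : Real.exp ((U : ℝ) / D8) ≤ ((bnS U D8 16 : ℝ) * 16 + (U : ℝ) ^ 16 * 17) /
      ((D8 : ℝ) ^ 16 * F * 16) := by
    refine hb.trans (le_of_eq ?_)
    rw [← hF, hs, div_pow]
    push_cast
    generalize (∑ m ∈ Finset.range 16, ((U : ℝ) / D8) ^ m / m.factorial) = Q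
    field_simp
    ring
  have he : Real.exp ((U : ℝ) / D) = Real.exp ((U : ℝ) / D8) ^ 8 := by
    rw [← Real.exp_nat_mul, hD8e]
    congr 1
    push_cast
    field_simp
  rw [he]
  have hden : (0 : ℝ) < (D8 : ℝ) ^ 16 * F * 16 := by positivity
  calc (U : ℝ) / D * Real.exp ((U : ℝ) / D8) ^ 8
      ≤ (U : ℝ) / D * (((bnS U D8 16 : ℝ) * 16 + (U : ℝ) ^ 16 * 17) /
      ((D8 : ℝ) ^ 16 * F * 16)) ^ 8 := by gcongr
    _ = (U * ((bnS U D8 16 : ℝ) * 16 + (U : ℝ) ^ 16 * 17) ^ 8) /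
      (D * ((D8 : ℝ) ^ 16 * F * 16) ^ 8) := by rw [div_pow, div_mul_div_comm]
    _ ≤ n + 1 := by
      rw [div_le_iff₀ (by positivity)]
      linarith

lemma exp_lower_chk (U D F P V : ℕ) (hD : 0 < D) (hU : 0 < U) (hF : F = Nat.factorial 16)
    (hP : 0 < P)
    (hV : V = (P * bnS (U * U + D * D) (8 * U * D) 16 ^ 8) / ((8 * U * D) ^ 16 * F) ^ 8) :
    (V : ℝ) / P ≤ Real.exp ((U : ℝ) / D + 1 / ((U : ℝ) / D)) := by
  have hDr : (0 : ℝ) < D := by exact_mod_cast hD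
  have hUr : (0 : ℝ) < U := by exact_mod_cast hU
  have hPr : (0 : ℝ) < P := by exact_mod_cast hP
  have hb0 : 0 < 8 * U * D := by positivity
  have hFr : (0 : ℝ) < (F : ℝ) := by rw [hF]; positivity
  have hs := bnS_spec (U * U + D * D) (8 * U * D) hb0 16
  rw [← hF] at hs
  set a := U * U + D * D with ha
  set b := 8 * U * D with hb
  have hbr : (0 : ℝ) < b := by exact_mod_cast hb0
  have he : Real.exp ((U : ℝ) / D + 1 / ((U : ℝ) / D)) = Real.exp ((a : ℝ) / b) ^ 8 := by
    rw [← Real.exp_nat_mul, ha, hb]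
    congr 1
    push_cast
    field_simp
  have hl := Real.sum_le_exp_of_nonneg (x := (a : ℝ) / b) (by positivity) 16
  have hl0 : 0 ≤ ∑ m ∈ Finset.range 16, ((a : ℝ) / b) ^ m / m.factorial := by positivity
  have hq : (bnS a b 16 : ℝ) / ((b : ℝ) ^ 16 * F) ≤ Real.exp ((a : ℝ) / b) := by
    rw [hs, mul_div_cancel_left₀ _ (by positivity)]
    exact hl
  have hVr : (V : ℝ) ≤ (P * (bnS a b 16 : ℝ) ^ 8) / ((b : ℝ) ^ 16 * F) ^ 8 := by
    rw [hV]
    refine Nat.cast_div_le.trans (le_of_eq ?_)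
    push_cast
    rfl
  rw [he, div_le_iff₀ hPr]
  calc (V : ℝ) ≤ (P * (bnS a b 16 : ℝ) ^ 8) / ((b : ℝ) ^ 16 * F) ^ 8 := hVr
    _ = ((bnS a b 16 : ℝ) / ((b : ℝ) ^ 16 * F)) ^ 8 * P := by rw [div_pow]; ring
    _ ≤ _ := by gcongr

lemma final_chk (n B U D P V : ℕ) (hD : 0 < D) (hUD : D ≤ U)
    (hP : 0 < P)
    (h1 : ((U : ℝ) / D) * Real.exp ((U : ℝ) / D) ≤ n + 1)
    (h2 : (V : ℝ) / P ≤ Real.exp ((U : ℝ) / D + 1 / ((U : ℝ) / D)))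
    (h3 : B * B * (n + 1) ^ (2 * (n + 1)) * 2 * 314159265359 * (n + 1) * (U + D)
        * 27182818286 ^ 2 * D * P ^ (2 * (n + 1)) ≤
      n.factorial * n.factorial * U * U * V ^ (2 * (n + 1)) * 10 ^ 31) :
    (B : ℝ) ≤ E n := by
  have hDr : (0 : ℝ) < D := by exact_mod_cast hD
  have hUDr : (D : ℝ) ≤ U := by exact_mod_cast hUD
  have hPr : (0 : ℝ) < P := by exact_mod_cast hP
  refine le_trans ?_ (E_lower n ((U : ℝ) / D) (n + 1) rfl (by rw [le_div_iff₀ hDr]; linarith) h1)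
  set N : ℝ := (n : ℝ) + 1 with hN
  have hN0 : 0 < N := by rw [hN]; positivity
  set u := (U : ℝ) / D with hu
  have hu0 : 0 < u := by rw [hu]; apply div_pos <;> linarith
  have h3' : (B : ℝ) * B * N ^ (2 * (n + 1)) * 2 * 314159265359 * N * (U + D)
        * 27182818286 ^ 2 * D * P ^ (2 * (n + 1)) ≤
      n.factorial * n.factorial * U * U * V ^ (2 * (n + 1)) * 10 ^ 31 := by
    rw [hN]; exact_mod_cast h3
  have hpi : Real.pi ≤ 314159265359 / 10 ^ 11 := by
    have := Real.pi_lt_d20; norm_num at this ⊢; linarith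
  have he1 : Real.exp 1 ≤ 27182818286 / 10 ^ 10 := by
    have := Real.exp_one_lt_d9; norm_num at this ⊢; linarith
  have hUe : (U : ℝ) = u * D := by rw [hu]; field_simp
  set v := (V : ℝ) / P with hv
  have hVe : (V : ℝ) = v * P := by rw [hv]; field_simp
  have hv0 : 0 ≤ v := by rw [hv]; positivity
  rw [hUe, hVe] at h3'
  -- normalised inequality
  have h4 : (B : ℝ) ^ 2 * N ^ (2 * (n + 1)) * (2 * (314159265359 / 10 ^ 11) * N * (u + 1))
        * (27182818286 / 10 ^ 10) ^ 2 ≤ (n.factorial : ℝ) ^ 2 * u ^ 2 * v ^ (2 * (n + 1)) := by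
    rw [mul_pow] at h3'
    have hK : (0 : ℝ) < D ^ 2 * P ^ (2 * (n + 1)) * 10 ^ 31 := by positivity
    refine le_of_mul_le_mul_right ?_ hK
    calc _ = (B : ℝ) * B * N ^ (2 * (n + 1)) * 2 * 314159265359 * N * (u * D + D)
        * 27182818286 ^ 2 * D * P ^ (2 * (n + 1)) := by ring
      _ ≤ _ := h3'
      _ = _ := by ring
  have hW : 0 < 2 * Real.pi * N * (u + 1) := by positivity
  have h5 : (B : ℝ) ^ 2 * N ^ (2 * (n + 1)) * (2 * Real.pi * N * (u + 1)) * Real.exp 1 ^ 2 ≤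
      (n.factorial : ℝ) ^ 2 * u ^ 2 * Real.exp (u + 1 / u) ^ (2 * (n + 1)) := by
    calc _ ≤ (B : ℝ) ^ 2 * N ^ (2 * (n + 1)) * (2 * (314159265359 / 10 ^ 11) * N * (u + 1))
        * (27182818286 / 10 ^ 10) ^ 2 := by gcongr
      _ ≤ _ := h4
      _ ≤ _ := by gcongr
  have hS := Real.sqrt_pos.mpr hW
  have e1 : Real.exp (N * (u + 1 / u) - 1) = Real.exp (u + 1 / u) ^ (n + 1) / Real.exp 1 := by
    rw [Real.exp_sub, ← Real.exp_nat_mul]; push_cast; rfl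
  rw [e1]
  apply le_of_sq_le_sq _ (by positivity)
  have e2 : ((n.factorial : ℝ) / N ^ (n + 1) * (Real.exp (u + 1 / u) ^ (n + 1) / Real.exp 1) *
      (u / Real.sqrt (2 * Real.pi * N * (u + 1)))) ^ 2 =
      ((n.factorial : ℝ) ^ 2 * u ^ 2 * Real.exp (u + 1 / u) ^ (2 * (n + 1))) /
      (N ^ (2 * (n + 1)) * (2 * Real.pi * N * (u + 1)) * Real.exp 1 ^ 2) := by
    rw [mul_pow, mul_pow, div_pow, div_pow, div_pow, Real.sq_sqrt hW.le, ← pow_mul, ← pow_mul,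
      mul_comm (n + 1) 2]
    field_simp
  rw [e2, le_div_iff₀ (by positivity)]
  linarith

lemma bnChk_spec (n B U : ℕ) (h : bnChk n B n.factorial U = true) : (B : ℝ) ≤ E n := by
  unfold bnChk at h
  rw [bnForce_eq] at h
  simp only [Bool.and_eq_true] at h
  obtain ⟨a1, a2, a3, a4⟩ := h
  have a1 := Nat.le_of_ble_eq_true a1
  have a2 := Nat.le_of_ble_eq_true a2
  have a3 := Nat.le_of_ble_eq_true a3
  have a4 := Nat.le_of_ble_eq_true a4
  have hF : 20922789888000 = Nat.factorial 16 := by decide +kernel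
  refine final_chk n B U 1000000000000 (2 ^ 60) _ (by norm_num) a1 (by positivity)
    (exp_upper_chk n U 1000000000000 8000000000000 20922789888000 (by norm_num) (by norm_num)
      (by omega) hF a3)
    (exp_lower_chk U 1000000000000 20922789888000 (2 ^ 60) _ (by norm_num) (by omega) hF
      (by positivity) rfl) ?_
  rw [← pow_mul]
  exact a4

theorem bnLoop_true : bnLoop bnCerts 311 (Nat.factorial 311) (bnRow 310) = true := by
  decide +kernel

lemma small_case (n : ℕ) (h1 : 311 ≤ n) (h2 : n < 457) : (Bell n : ℝ) ≤ E n := by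
  have h := bnLoop_true
  rw [bnRow_spec] at h
  have hl : bnCerts.length = 149 := by decide +kernel
  obtain ⟨U, hU⟩ := bnLoop_spec bnCerts 310 h (n - 311) (by omega)
  have e : 310 + 1 + (n - 311) = n := by omega
  rw [e] at hU
  exact bnChk_spec n _ U hU

/-! ### The integral representation -/

lemma gam_norm (z : ℂ) (n : ℕ) (x : ℝ) (hx : 0 ≤ x) :
    ‖(x : ℂ) ^ n * Complex.exp (-z * x)‖ = x ^ (n : ℝ) * Real.exp (-z.re * x) := by
  rw [norm_mul, norm_pow, Complex.norm_real, Complex.norm_exp, Real.rpow_natCast,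
    Real.norm_of_nonneg hx]
  simp

lemma gam_int (z : ℂ) (hz : 0 < z.re) (n : ℕ) :
    MeasureTheory.IntegrableOn (fun x : ℝ => (x : ℂ) ^ n * Complex.exp (-z * x)) (Set.Ioi 0) := by
  have h := integrableOn_rpow_mul_exp_neg_mul_rpow (p := 1) (s := n) (b := z.re)
    (by have : (0 : ℝ) ≤ n := by positivity
        linarith) one_pos hz
  refine MeasureTheory.Integrable.mono' h ?_ ?_
  · exact (Continuous.aestronglyMeasurable (by fun_prop))
  · refine (MeasureTheory.ae_restrict_iff' measurableSet_Ioi).mpr (Filter.Eventually.of_forall ?_)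
    intro x hx
    rw [gam_norm z n x (le_of_lt hx), Real.rpow_one]

lemma gam_val (z : ℂ) (hz : 0 < z.re) (n : ℕ) :
    ∫ x : ℝ in Set.Ioi 0, (x : ℂ) ^ n * Complex.exp (-z * x) = n.factorial / z ^ (n + 1) := by
  have hz0 : z ≠ 0 := by intro h; rw [h] at hz; simp at hz
  have hexp : ∀ x : ℝ, HasDerivAt (fun x : ℝ => Complex.exp (-z * x)) (Complex.exp (-z * x) * (-z)) x := by
    intro x
    have h1 : HasDerivAt (fun x : ℝ => -z * (x : ℂ)) (-z) x := by
      simpa using (HasDerivAt.ofReal_comp (hasDerivAt_id x)).const_mul (-z)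
    exact h1.cexp
  have hlim : ∀ n : ℕ, Filter.Tendsto (fun x : ℝ => (x : ℂ) ^ n * Complex.exp (-z * x) / (-z))
      Filter.atTop (nhds 0) := by
    intro n
    have h0 : Filter.Tendsto (fun x : ℝ => (x : ℂ) ^ n * Complex.exp (-z * x))
      Filter.atTop (nhds 0) := by
      rw [tendsto_zero_iff_norm_tendsto_zero]
      refine (tendsto_rpow_mul_exp_neg_mul_atTop_nhds_zero n z.re hz).congr' ?_
      filter_upwards [Filter.eventually_ge_atTop 0] with x hx
      rw [gam_norm z n x hx]
    simpa using h0.div_const (-z)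
  induction n with
  | zero =>
    have := MeasureTheory.integral_Ioi_of_hasDerivAt_of_tendsto' (a := (0 : ℝ))
      (f := fun x : ℝ => (x : ℂ) ^ 0 * Complex.exp (-z * x) / (-z))
      (f' := fun x : ℝ => (x : ℂ) ^ 0 * Complex.exp (-z * x)) (m := 0)
      (by
        intro x _
        have := (hexp x).div_const (-z)
        rw [mul_div_cancel_right₀ _ (neg_ne_zero.mpr hz0)] at this
        simpa using this) (gam_int z hz 0) (hlim 0)
    rw [this]
    simp
  | succ n ih =>
    have := MeasureTheory.integral_Ioi_of_hasDerivAt_of_tendsto' (a := (0 : ℝ))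
      (f := fun x : ℝ => (x : ℂ) ^ (n + 1) * Complex.exp (-z * x) / (-z))
      (f' := fun x : ℝ => (x : ℂ) ^ (n + 1) * Complex.exp (-z * x) -
        ((n + 1 : ℂ) / z) * ((x : ℂ) ^ n * Complex.exp (-z * x))) (m := 0)
      (by
        intro x _
        have hp : HasDerivAt (fun x : ℝ => (x : ℂ) ^ (n + 1)) ((n + 1 : ℂ) * (x : ℂ) ^ n) x := by
          have := (hasDerivAt_pow (n + 1) (x : ℂ)).comp_ofReal
          simpa using this
        refine ((hp.mul (hexp x)).div_const (-z)).congr_deriv ?_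
        field_simp
        ring)
      ((gam_int z hz (n + 1)).sub ((gam_int z hz n).const_mul _)) (hlim (n + 1))
    rw [MeasureTheory.integral_sub (gam_int z hz (n + 1)) ((gam_int z hz n).const_mul _),
      MeasureTheory.integral_const_mul, ih] at this
    simp at this
    rw [sub_eq_zero] at this
    simp only [neg_mul] at this ⊢
    rw [this, Nat.factorial_succ]
    push_cast
    field_simp
    ring

lemma zinv_norm (R : ℝ) (hR : 0 < R) (n : ℕ) (hn : 1 ≤ n) (y : ℝ) :
    ‖((1 : ℂ) / ((R : ℂ) + y * Complex.I) ^ (n + 1))‖ ≤ (1 / R ^ (n + 1)) * (1 + (y / R) ^ 2)⁻¹ := by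
  have h1 : ‖((R : ℂ) + y * Complex.I)‖ ^ 2 = R ^ 2 + y ^ 2 := by
    rw [← Complex.normSq_eq_norm_sq, Complex.normSq_add_mul_I]
  have h2 : R ≤ ‖((R : ℂ) + y * Complex.I)‖ := by
    apply le_of_sq_le_sq _ (norm_nonneg _)
    rw [h1]; nlinarith [sq_nonneg y]
  rw [norm_div, norm_one, norm_pow]
  obtain ⟨m, rfl⟩ : ∃ m, n = m + 1 := ⟨n - 1, by omega⟩
  rw [show m + 1 + 1 = m + 2 by ring, pow_add, h1]
  have : (1 / R ^ (m + 2)) * (1 + (y / R) ^ 2)⁻¹ = 1 / (R ^ m * (R ^ 2 + y ^ 2)) := by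
    field_simp
    ring
  rw [this]
  have : 0 < R ^ 2 + y ^ 2 := by positivity
  gcongr

lemma cauchy_int (R : ℝ) (hR : 0 < R) : MeasureTheory.Integrable (fun y : ℝ => (1 + (y / R) ^ 2)⁻¹) :=
  integrable_inv_one_add_sq.comp_div hR.ne'

lemma z_ne (R : ℝ) (hR : 0 < R) (y : ℝ) : (R : ℂ) + y * Complex.I ≠ 0 := by
  intro h
  have := congrArg Complex.re h
  simp at this
  linarith

lemma zinv_int (R : ℝ) (hR : 0 < R) (n : ℕ) (hn : 1 ≤ n) :
    MeasureTheory.Integrable (fun y : ℝ => (1 : ℂ) / ((R : ℂ) + y * Complex.I) ^ (n + 1)) := by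
  refine MeasureTheory.Integrable.mono' ((cauchy_int R hR).const_mul (1 / R ^ (n + 1))) ?_ ?_
  · refine Continuous.aestronglyMeasurable ?_
    refine Continuous.div continuous_const (by fun_prop) ?_
    intro y
    exact pow_ne_zero _ (z_ne R hR y)
  · exact Filter.Eventually.of_forall (fun y => zinv_norm R hR n hn y)

open FourierTransform in
lemma pow_rep (R : ℝ) (hR : 0 < R) (n : ℕ) (hn : 1 ≤ n) (k : ℝ) (hk : 0 ≤ k) :
    ((k : ℂ) ^ n) = n.factorial / (2 * Real.pi) *
      ∫ y : ℝ, Complex.exp (k * ((R : ℂ) + y * Complex.I)) / ((R : ℂ) + y * Complex.I) ^ (n + 1) := by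
  set f : ℝ → ℂ := fun x => (Set.Ioi (0 : ℝ)).indicator (fun x : ℝ => (x : ℂ) ^ n * Complex.exp (-(R : ℂ) * x)) x with hf
  have hfe : ∀ x, 0 ≤ x → f x = (x : ℂ) ^ n * Complex.exp (-(R : ℂ) * x) := by
    intro x hx
    rcases hx.eq_or_lt with rfl | hx
    · simp [hf, show n ≠ 0 by omega]
    · simp [hf, hx]
  have hfc : Continuous f := by
    have : f = fun x : ℝ => ((max x 0 : ℝ) : ℂ) ^ n * Complex.exp (-(R : ℂ) * x) := by
      funext x
      rcases le_or_gt 0 x with hx | hx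
      · rw [hfe x hx, max_eq_left hx]
      · rw [max_eq_right hx.le]
        simp [hf, hx.le, show n ≠ 0 by omega]
    rw [this]
    fun_prop
  have hfi : MeasureTheory.Integrable f := by
    rw [hf, MeasureTheory.integrable_indicator_iff measurableSet_Ioi]
    exact gam_int R (by simpa using hR) n
  have hF : ∀ w : ℝ, 𝓕 f w = n.factorial * (1 / ((R : ℂ) + ((2 * Real.pi * w : ℝ) : ℂ) * Complex.I) ^ (n + 1)) := by
    intro w
    rw [Real.fourier_real_eq_integral_exp_smul]
    have hz : 0 < ((R : ℂ) + ((2 * Real.pi * w : ℝ) : ℂ) * Complex.I).re := by simpa using hR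
    have hv := gam_val _ hz n
    rw [mul_one_div, ← hv, ← MeasureTheory.integral_indicator measurableSet_Ioi]
    congr 1
    funext x
    rw [hf]
    by_cases hx : x ∈ Set.Ioi (0 : ℝ)
    · simp only [Set.indicator_of_mem hx, smul_eq_mul]
      rw [mul_left_comm, ← Complex.exp_add]
      congr 2
      push_cast
      ring
    · simp only [Set.indicator_of_notMem hx, smul_zero]
  have hFi : MeasureTheory.Integrable (𝓕 f) := by
    have : 𝓕 f = fun w : ℝ => n.factorial * (1 / ((R : ℂ) + ((2 * Real.pi * w : ℝ) : ℂ) * Complex.I) ^ (n + 1)) :=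
      funext hF
    rw [this]
    exact ((zinv_int R hR n hn).comp_mul_left' (by positivity : 2 * Real.pi ≠ 0)).const_mul _
  have hinv := congrFun (hfc.fourierInv_fourier_eq hfi hFi) k
  rw [Real.fourierInv_eq', hfe k hk] at hinv
  have hE : Complex.exp (-(R : ℂ) * k) ≠ 0 := Complex.exp_ne_zero _
  have h1 : (k : ℂ) ^ n = Complex.exp ((R : ℂ) * k) * ∫ v : ℝ, Complex.exp (((2 * Real.pi * inner ℝ v k : ℝ) : ℂ) * Complex.I) • 𝓕 f v := by
    rw [hinv, mul_left_comm, ← Complex.exp_add]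
    simp
  rw [h1, ← MeasureTheory.integral_const_mul]
  have h2 : ∀ v : ℝ, Complex.exp ((R : ℂ) * k) * (Complex.exp (((2 * Real.pi * inner ℝ v k : ℝ) : ℂ) * Complex.I) • 𝓕 f v) =
     n.factorial * (fun y : ℝ => Complex.exp (k * ((R : ℂ) + y * Complex.I)) / ((R : ℂ) + y * Complex.I) ^ (n + 1)) (2 * Real.pi * v) := by
    intro v
    rw [hF, smul_eq_mul]
    simp only [mul_one_div]
    rw [show (k : ℂ) * ((R : ℂ) + ((2 * Real.pi * v : ℝ) : ℂ) * Complex.I) = (R : ℂ) * k + ((2 * Real.pi * inner ℝ v k : ℝ) : ℂ) * Complex.I by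
      simp; ring, Complex.exp_add]
    ring
  simp only [h2]
  rw [MeasureTheory.integral_const_mul, MeasureTheory.Measure.integral_comp_mul_left
    (fun y : ℝ => Complex.exp (k * ((R : ℂ) + y * Complex.I)) / ((R : ℂ) + y * Complex.I) ^ (n + 1))]
  rw [abs_of_pos (by positivity)]
  simp only [Complex.real_smul]
  push_cast
  ring

/-! ### Dobinski and the integral for Bell numbers -/

lemma dobinski (n : ℕ) : HasSum (fun k : ℕ => (k : ℝ) ^ n / k.factorial) (Real.exp 1 * Bell n) := by
  induction n using Nat.strong_induction_on with
  | _ n ih =>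
    rcases n with _ | n
    · have h := NormedSpace.expSeries_div_hasSum_exp (1 : ℝ)
      rw [← Real.exp_eq_exp_ℝ] at h
      simpa [Bell] using h
    · rw [← hasSum_nat_add_iff' 1]
      have h1 : HasSum (fun j : ℕ => ∑ i ∈ Finset.range (n + 1), (n.choose i : ℝ) * ((j : ℝ) ^ i / j.factorial))
          (∑ i ∈ Finset.range (n + 1), (n.choose i : ℝ) * (Real.exp 1 * Bell i)) := by
        refine hasSum_sum ?_
        intro i hi
        exact (ih i (Finset.mem_range.mp hi)).mul_left _
      have e1 : Real.exp 1 * (Bell (n + 1) : ℝ) - ∑ i ∈ Finset.range 1, ((i : ℕ) : ℝ) ^ (n + 1) / (i.factorial : ℝ)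
         = ∑ i ∈ Finset.range (n + 1), (n.choose i : ℝ) * (Real.exp 1 * Bell i) := by
        rw [Bell_succ]
        push_cast
        rw [Finset.mul_sum]
        simp
        refine Finset.sum_congr rfl (fun i _ => by ring)
      rw [e1]
      refine h1.congr_fun ?_
      intro j
      rw [Nat.factorial_succ]
      push_cast
      rw [pow_succ, add_pow, Finset.sum_mul, Finset.sum_div]
      refine Finset.sum_congr rfl (fun i _ => ?_)
      have : (j.factorial : ℝ) ≠ 0 := by positivity
      have : (j : ℝ) + 1 ≠ 0 := by positivity
      simp
      field_simp

lemma bell_int (R : ℝ) (hR : 0 < R) (n : ℕ) (hn : 1 ≤ n) :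
    ((Real.exp 1 * Bell n : ℝ) : ℂ) = n.factorial / (2 * Real.pi) *
      ∫ y : ℝ, Complex.exp (Complex.exp ((R : ℂ) + y * Complex.I)) * (1 / ((R : ℂ) + y * Complex.I) ^ (n + 1)) := by
  set F : ℕ → ℝ → ℂ := fun k y => (Complex.exp (k * ((R : ℂ) + y * Complex.I)) / k.factorial) *
    (1 / ((R : ℂ) + y * Complex.I) ^ (n + 1)) with hF
  have hnorm : ∀ k y, ‖F k y‖ = (Real.exp R ^ k / k.factorial) * ‖1 / ((R : ℂ) + y * Complex.I) ^ (n + 1)‖ := by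
    intro k y
    rw [hF]
    simp only
    rw [norm_mul, norm_div, Complex.norm_exp, ← Real.exp_nat_mul]
    simp
  have hint : ∀ k, MeasureTheory.Integrable (F k) := by
    intro k
    refine MeasureTheory.Integrable.mono ((zinv_int R hR n hn).norm.const_mul (Real.exp R ^ k / k.factorial)) ?_ ?_
    · refine Continuous.aestronglyMeasurable ?_
      refine Continuous.mul (by fun_prop) (Continuous.div continuous_const (by fun_prop) ?_)
      intro y
      exact pow_ne_zero _ (z_ne R hR y)
    · refine Filter.Eventually.of_forall (fun y => ?_)
      rw [hnorm, Real.norm_of_nonneg (by positivity)]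
  have hsum : Summable fun k => ∫ y, ‖F k y‖ := by
    simp only [hnorm, MeasureTheory.integral_const_mul]
    exact (Real.summable_pow_div_factorial _).mul_right _
  have h := MeasureTheory.hasSum_integral_of_summable_integral_norm hint hsum
  have e1 : ∀ y : ℝ, ∑' k, F k y = Complex.exp (Complex.exp ((R : ℂ) + y * Complex.I)) * (1 / ((R : ℂ) + y * Complex.I) ^ (n + 1)) := by
    intro y
    rw [hF]
    simp only
    rw [tsum_mul_right]
    congr 1
    rw [Complex.exp_eq_exp_ℂ, ← (NormedSpace.expSeries_div_hasSum_exp (NormedSpace.exp ((R : ℂ) + y * Complex.I))).tsum_eq]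
    congr 1
    funext k
    rw [← Complex.exp_eq_exp_ℂ, ← Complex.exp_nat_mul]
  simp only [e1] at h
  have h2 := h.mul_left ((n.factorial : ℂ) / (2 * Real.pi))
  have h3 : HasSum (fun k : ℕ => (((k : ℝ) ^ n / k.factorial : ℝ) : ℂ)) ((Real.exp 1 * Bell n : ℝ) : ℂ) :=
    Complex.hasSum_ofReal.mpr (dobinski n)
  refine h3.unique ?_
  refine h2.congr_fun ?_
  intro k
  have hp := pow_rep R hR n hn k (by positivity)
  have e2 : ∫ y, F k y = (∫ y : ℝ, Complex.exp (((k : ℝ) : ℂ) * ((R : ℂ) + y * Complex.I)) / ((R : ℂ) + y * Complex.I) ^ (n + 1)) / (k.factorial : ℂ) := by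
    rw [← MeasureTheory.integral_div]
    congr 1
    funext y
    rw [hF]
    simp only [Complex.ofReal_natCast]
    ring
  rw [e2, ← mul_div_assoc, ← hp]
  push_cast
  rfl

noncomputable def bA (L N R y : ℝ) : ℝ := L * (1 - Real.cos y) + N / 2 * Real.log (1 + (y / R) ^ 2)
noncomputable def bB (L N R y : ℝ) : ℝ := L * Real.sin y - N * Real.arctan (y / R)

lemma z_polar (R : ℝ) (hR : 0 < R) (y : ℝ) : (R : ℂ) + y * Complex.I =
    Complex.exp ((Real.log R + Real.log (1 + (y / R) ^ 2) / 2 : ℝ) + (Real.arctan (y / R) : ℝ) * Complex.I) := by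
  have h1 : (0 : ℝ) < 1 + (y / R) ^ 2 := by positivity
  have h2 : Real.exp (Real.log R + Real.log (1 + (y / R) ^ 2) / 2) = R * √(1 + (y / R) ^ 2) := by
    rw [Real.exp_add, Real.exp_log hR, Real.exp_half, Real.exp_log h1]
  have h3 : √(1 + (y / R) ^ 2) ≠ 0 := (Real.sqrt_pos.mpr h1).ne'
  apply Complex.ext
  · rw [Complex.exp_re]
    simp only [Complex.add_re, Complex.add_im, Complex.mul_re, Complex.mul_im, Complex.ofReal_re,
      Complex.ofReal_im, Complex.I_re, Complex.I_im, mul_zero, mul_one, zero_mul, sub_zero, add_zero, zero_add, sub_self]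
    rw [h2, Real.cos_arctan]
    field_simp
  · rw [Complex.exp_im]
    simp only [Complex.add_re, Complex.add_im, Complex.mul_re, Complex.mul_im, Complex.ofReal_re,
      Complex.ofReal_im, Complex.I_re, Complex.I_im, mul_zero, mul_one, zero_mul, sub_zero, add_zero, zero_add, sub_self]
    rw [h2, Real.sin_arctan]
    field_simp

lemma integrand_re (R : ℝ) (hR : 0 < R) (n : ℕ) (y : ℝ) :
    (Complex.exp (Complex.exp ((R : ℂ) + y * Complex.I)) * (1 / ((R : ℂ) + y * Complex.I) ^ (n + 1))).re =
    Real.exp (Real.exp R) / R ^ (n + 1) * (Real.exp (-bA (Real.exp R) (n + 1) R y) * Real.cos (bB (Real.exp R) (n + 1) R y)) := by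
  have h1 : Complex.exp ((R : ℂ) + y * Complex.I) = (Real.exp R * Real.cos y : ℝ) + (Real.exp R * Real.sin y : ℝ) * Complex.I := by
    rw [Complex.exp_add, Complex.exp_mul_I]
    push_cast
    ring
  have h2 : Complex.exp (Complex.exp ((R : ℂ) + y * Complex.I)) * (1 / ((R : ℂ) + y * Complex.I) ^ (n + 1)) =
     Complex.exp ((Real.exp R * Real.cos y - (n + 1) * (Real.log R + Real.log (1 + (y / R) ^ 2) / 2) : ℝ)
       + (bB (Real.exp R) (n + 1) R y : ℝ) * Complex.I) := by
    rw [h1, z_polar R hR y, ← Complex.exp_nat_mul, one_div, ← Complex.exp_neg, ← Complex.exp_add]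
    congr 1
    unfold bB
    push_cast
    ring
  rw [h2, Complex.exp_re]
  simp only [Complex.add_re, Complex.add_im, Complex.mul_re, Complex.mul_im, Complex.ofReal_re,
      Complex.ofReal_im, Complex.I_re, Complex.I_im, mul_zero, mul_one, zero_mul, sub_zero, add_zero, zero_add, sub_self]
  rw [← mul_assoc]
  congr 1
  have : R ^ (n + 1) = Real.exp ((n + 1 : ℕ) * Real.log R) := by
    rw [Real.exp_nat_mul, Real.exp_log hR]
  rw [this, ← Real.exp_sub, ← Real.exp_add]
  congr 1
  unfold bA
  push_cast
  ring

lemma bell_real (R : ℝ) (hR : 0 < R) (n : ℕ) (hn : 1 ≤ n) :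
    MeasureTheory.Integrable (fun y : ℝ => Real.exp (-bA (Real.exp R) (n + 1) R y) * Real.cos (bB (Real.exp R) (n + 1) R y)) ∧
    (Bell n : ℝ) = n.factorial * Real.exp (Real.exp R - 1) / (2 * Real.pi * R ^ (n + 1)) *
      ∫ y : ℝ, Real.exp (-bA (Real.exp R) (n + 1) R y) * Real.cos (bB (Real.exp R) (n + 1) R y) := by
  have hi : MeasureTheory.Integrable (fun y : ℝ => Complex.exp (Complex.exp ((R : ℂ) + y * Complex.I)) * (1 / ((R : ℂ) + y * Complex.I) ^ (n + 1))) := by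
    refine MeasureTheory.Integrable.mono ((zinv_int R hR n hn).norm.const_mul (Real.exp (Real.exp R))) ?_ ?_
    · refine Continuous.aestronglyMeasurable ?_
      refine Continuous.mul (by fun_prop) (Continuous.div continuous_const (by fun_prop) ?_)
      intro y
      exact pow_ne_zero _ (z_ne R hR y)
    · refine Filter.Eventually.of_forall (fun y => ?_)
      rw [norm_mul, Complex.norm_exp, Real.norm_of_nonneg (by positivity)]
      gcongr
      refine (Complex.re_le_norm _).trans ?_
      rw [Complex.norm_exp]
      simp
  have hre := hi.re
  have hval := integral_re hi
  have hb := congrArg Complex.re (bell_int R hR n hn)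
  simp only [RCLike.re_eq_complex_re, integrand_re R hR n] at hre hval
  have hc : Real.exp (Real.exp R) / R ^ (n + 1) ≠ 0 := by positivity
  refine ⟨?_, ?_⟩
  · have := hre.const_mul (Real.exp (Real.exp R) / R ^ (n + 1))⁻¹
    refine this.congr (Filter.Eventually.of_forall (fun y => ?_))
    simp only
    rw [← mul_assoc, inv_mul_cancel₀ hc, one_mul]
  · rw [show (n.factorial : ℂ) / (2 * Real.pi) = ((n.factorial / (2 * Real.pi) : ℝ) : ℂ) by push_cast; rfl,
      Complex.re_ofReal_mul, ← hval, MeasureTheory.integral_const_mul, Complex.ofReal_re] at hb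
    have he : Real.exp 1 ≠ 0 := (Real.exp_pos 1).ne'
    rw [Real.exp_sub]
    field_simp
    field_simp at hb
    linarith

/-! ### Elementary inequalities -/

lemma mono_aux (f f' : ℝ → ℝ) (h0 : f 0 = 0) (hd : ∀ x, 0 ≤ x → HasDerivAt f (f' x) x)
    (hp : ∀ x, 0 ≤ x → 0 ≤ f' x) (x : ℝ) (hx : 0 ≤ x) : 0 ≤ f x := by
  have hm : MonotoneOn f (Set.Ici 0) := by
    refine monotoneOn_of_deriv_nonneg (convex_Ici 0) ?_ ?_ ?_
    · intro y hy
      exact (hd y hy).continuousAt.continuousWithinAt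
    · intro y hy
      rw [interior_Ici] at hy
      exact (hd y (le_of_lt hy)).differentiableAt.differentiableWithinAt
    · intro y hy
      rw [interior_Ici] at hy
      rw [(hd y (le_of_lt hy)).deriv]
      exact hp y (le_of_lt hy)
  have := hm (Set.self_mem_Ici) (show x ∈ Set.Ici 0 from hx) hx
  rwa [h0] at this

lemma hd_mono (c : ℝ) (k : ℕ) (x : ℝ) : HasDerivAt (fun x : ℝ => c * x ^ k) (c * (k * x ^ (k - 1))) x :=
  (hasDerivAt_pow k x).const_mul c

lemma cos_lb (x : ℝ) : 1 - x ^ 2 / 2 ≤ Real.cos x := Real.one_sub_sq_div_two_le_cos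

lemma sin_lb (x : ℝ) (hx : 0 ≤ x) : x - x ^ 3 / 6 ≤ Real.sin x := by
  have := mono_aux (fun x => Real.sin x - x + (1 / 6) * x ^ 3) (fun x => Real.cos x - 1 + (1 / 6) * ((3 : ℕ) * x ^ 2)) (by simp)
    (fun x _ => ((Real.hasDerivAt_sin x).sub (hasDerivAt_id x)).add (hd_mono _ 3 x))
    (fun x _ => by have := cos_lb x; push_cast; linarith) x hx
  linarith

lemma cos_ub (x : ℝ) (hx : 0 ≤ x) : Real.cos x ≤ 1 - x ^ 2 / 2 + x ^ 4 / 24 := by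
  have := mono_aux (fun x => (1 - (1 / 2) * x ^ 2 + (1 / 24) * x ^ 4) - Real.cos x)
    (fun x => (0 - (1 / 2) * ((2 : ℕ) * x ^ 1) + (1 / 24) * ((4 : ℕ) * x ^ 3)) - -Real.sin x) (by simp)
    (fun x _ => ((((hasDerivAt_const x (1 : ℝ)).sub (hd_mono _ 2 x)).add (hd_mono _ 4 x)).sub (Real.hasDerivAt_cos x)))
    (fun x hx => by have := sin_lb x hx; push_cast; linarith) x hx
  linarith

lemma sin_ub (x : ℝ) (hx : 0 ≤ x) : Real.sin x ≤ x - x ^ 3 / 6 + x ^ 5 / 120 := by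
  have := mono_aux (fun x => (x - (1 / 6) * x ^ 3 + (1 / 120) * x ^ 5) - Real.sin x)
    (fun x => (1 - (1 / 6) * ((3 : ℕ) * x ^ 2) + (1 / 120) * ((5 : ℕ) * x ^ 4)) - Real.cos x) (by simp)
    (fun x _ => ((((hasDerivAt_id x).sub (hd_mono _ 3 x)).add (hd_mono _ 5 x)).sub (Real.hasDerivAt_sin x)))
    (fun x hx => by have := cos_ub x hx; push_cast; linarith) x hx
  linarith

lemma arctan_ub (x : ℝ) (hx : 0 ≤ x) : Real.arctan x ≤ x := by
  have := mono_aux (fun x => x - Real.arctan x)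
    (fun x => 1 - 1 / (1 + x ^ 2)) (by simp)
    (fun x _ => (hasDerivAt_id x).sub (Real.hasDerivAt_arctan x))
    (fun x hx => by
      rw [sub_nonneg, div_le_one (by positivity)]
      nlinarith [sq_nonneg x]) x hx
  linarith

lemma arctan_lb (x : ℝ) (hx : 0 ≤ x) : x - x ^ 3 / 3 ≤ Real.arctan x := by
  have := mono_aux (fun x => Real.arctan x - x + (1 / 3) * x ^ 3)
    (fun x => 1 / (1 + x ^ 2) - 1 + (1 / 3) * ((3 : ℕ) * x ^ 2)) (by simp)
    (fun x _ => ((Real.hasDerivAt_arctan x).sub (hasDerivAt_id x)).add (hd_mono _ 3 x))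
    (fun x hx => by
      have : 1 - x ^ 2 ≤ 1 / (1 + x ^ 2) := by
        rw [le_div_iff₀ (by positivity)]
        nlinarith [sq_nonneg (x ^ 2)]
      push_cast
      linarith) x hx
  linarith

lemma log_ub (x : ℝ) (hx : 0 ≤ x) : Real.log (1 + x) ≤ x := by
  have := Real.log_le_sub_one_of_pos (show 0 < 1 + x by positivity)
  linarith

lemma log_lb (x : ℝ) (hx : 0 ≤ x) : x - x ^ 2 / 2 ≤ Real.log (1 + x) := by
  have := mono_aux (fun x => Real.log (1 + x) - x + (1 / 2) * x ^ 2)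
    (fun x => 1 / (1 + x) - 1 + (1 / 2) * ((2 : ℕ) * x ^ 1)) (by simp)
    (fun x hx => ((((hasDerivAt_id x).const_add 1).log (by simp only [id]; positivity)).sub (hasDerivAt_id x)).add (hd_mono _ 2 x))
    (fun x hx => by
      have : 1 - x ≤ 1 / (1 + x) := by
        rw [le_div_iff₀ (by positivity)]
        nlinarith
      push_cast
      linarith) x hx
  linarith

lemma exp_ub (x : ℝ) (hx : 0 ≤ x) : Real.exp x ≤ 1 + x + x ^ 2 / 2 * Real.exp x := by
  have h1 : ∀ x : ℝ, 0 ≤ x → 1 ≤ Real.exp x := fun x hx => Real.one_le_exp hx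
  have h2 : ∀ x : ℝ, 0 ≤ x → Real.exp x ≤ 1 + x * Real.exp x := by
    intro x _
    have := Real.add_one_le_exp (-x)
    have h3 := Real.exp_pos x
    have : Real.exp x * (-x + 1) ≤ Real.exp x * Real.exp (-x) := by gcongr
    rw [← Real.exp_add, add_neg_cancel, Real.exp_zero] at this
    linarith
  have := mono_aux (fun x => ((1 + x) + ((1 / 2) * x ^ 2) * Real.exp x) - Real.exp x)
    (fun x => (1 + (((1 / 2) * ((2 : ℕ) * x ^ 1)) * Real.exp x + ((1 / 2) * x ^ 2) * Real.exp x)) - Real.exp x) (by simp)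
    (fun x _ => (((hasDerivAt_id x).const_add 1).add ((hd_mono _ 2 x).mul (Real.hasDerivAt_exp x))).sub (Real.hasDerivAt_exp x))
    (fun x hx => by
      have := h2 x hx
      have : 0 ≤ (1 / 2) * x ^ 2 * Real.exp x := by positivity
      push_cast
      simp only [pow_one]
      linarith) x hx
  linarith

/-! ### Gaussian moments -/

lemma gm_int (c : ℝ) (hc : 0 < c) (k : ℕ) :
    MeasureTheory.Integrable (fun y : ℝ => y ^ k * Real.exp (-(c / 2) * y ^ 2)) := by
  have h := integrable_rpow_mul_exp_neg_mul_sq (b := c / 2) (by positivity) (s := k)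
    (by have : (0 : ℝ) ≤ k := by positivity
        linarith)
  simpa [Real.rpow_natCast] using h

lemma gm_rec (c : ℝ) (hc : 0 < c) (k : ℕ) :
    ∫ y : ℝ, y ^ (k + 2) * Real.exp (-(c / 2) * y ^ 2) = (k + 1) / c * ∫ y : ℝ, y ^ k * Real.exp (-(c / 2) * y ^ 2) := by
  have hi : MeasureTheory.Integrable (fun y : ℝ => (k + 1 : ℝ) * (y ^ k * Real.exp (-(c / 2) * y ^ 2)) -
       c * (y ^ (k + 2) * Real.exp (-(c / 2) * y ^ 2))) :=
    ((gm_int c hc k).const_mul _).sub ((gm_int c hc (k + 2)).const_mul _)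
  have h := MeasureTheory.integral_eq_zero_of_hasDerivAt_of_integrable
    (f := fun y : ℝ => y ^ (k + 1) * Real.exp (-(c / 2) * y ^ 2))
    (f' := fun y : ℝ => (k + 1 : ℝ) * (y ^ k * Real.exp (-(c / 2) * y ^ 2)) -
       c * (y ^ (k + 2) * Real.exp (-(c / 2) * y ^ 2)))
    (by
      intro y
      refine ((hasDerivAt_pow (k + 1) y).mul (hd_mono (-(c / 2)) 2 y).exp).congr_deriv ?_
      simp only [Nat.add_sub_cancel]
      push_cast
      ring) hi (gm_int c hc (k + 1))
  rw [MeasureTheory.integral_sub ((gm_int c hc k).const_mul _) ((gm_int c hc (k + 2)).const_mul _),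
    MeasureTheory.integral_const_mul, MeasureTheory.integral_const_mul] at h
  rw [div_mul_eq_mul_div, eq_div_iff hc.ne']
  linarith

lemma gm_0 (c : ℝ) : ∫ y : ℝ, y ^ 0 * Real.exp (-(c / 2) * y ^ 2) = √(2 * Real.pi / c) := by
  simp only [pow_zero, one_mul]
  rw [integral_gaussian]
  congr 1
  field_simp

lemma gm_4 (c : ℝ) (hc : 0 < c) : ∫ y : ℝ, y ^ 4 * Real.exp (-(c / 2) * y ^ 2) = 3 / c ^ 2 * √(2 * Real.pi / c) := by
  rw [gm_rec c hc 2, gm_rec c hc 0, gm_0]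
  push_cast
  field_simp
  ring

lemma gm_6 (c : ℝ) (hc : 0 < c) : ∫ y : ℝ, y ^ 6 * Real.exp (-(c / 2) * y ^ 2) = 15 / c ^ 3 * √(2 * Real.pi / c) := by
  rw [gm_rec c hc 4, gm_4 c hc]
  push_cast
  field_simp
  ring

lemma gm_8 (c : ℝ) (hc : 0 < c) : ∫ y : ℝ, y ^ 8 * Real.exp (-(c / 2) * y ^ 2) = 105 / c ^ 4 * √(2 * Real.pi / c) := by
  rw [gm_rec c hc 6, gm_6 c hc]
  push_cast
  field_simp
  ring

lemma gm_12 (c : ℝ) (hc : 0 < c) : ∫ y : ℝ, y ^ 12 * Real.exp (-(c / 2) * y ^ 2) = 10395 / c ^ 6 * √(2 * Real.pi / c) := by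
  rw [gm_rec c hc 10, gm_rec c hc 8, gm_8 c hc]
  push_cast
  field_simp
  ring

/-! ### Pointwise bounds -/

lemma bA_ub (L R y : ℝ) (hL : 0 < L) (hR : 0 < R) :
    bA L (R * L) R y ≤ L * (1 + 1 / R) / 2 * y ^ 2 := by
  unfold bA
  have h1 := cos_lb y
  have h2 := log_ub ((y / R) ^ 2) (by positivity)
  have h3 : L * (1 - Real.cos y) ≤ L * (y ^ 2 / 2) := by gcongr; linarith
  have h4 : R * L / 2 * Real.log (1 + (y / R) ^ 2) ≤ R * L / 2 * (y / R) ^ 2 := by gcongr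
  have h5 : L * (1 + 1 / R) / 2 * y ^ 2 = L * (y ^ 2 / 2) + R * L / 2 * (y / R) ^ 2 := by
    field_simp
  linarith

lemma bA_lb (L R y : ℝ) (hL : 0 < L) (hR : 0 < R) (hy : 0 ≤ y) :
    L * (1 + 1 / R) / 2 * y ^ 2 - L * (1 / 24 + 1 / (4 * R ^ 3)) * y ^ 4 ≤ bA L (R * L) R y := by
  unfold bA
  have h1 := cos_ub y hy
  have h2 := log_lb ((y / R) ^ 2) (by positivity)
  have h3 : L * (y ^ 2 / 2 - y ^ 4 / 24) ≤ L * (1 - Real.cos y) := by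
    apply mul_le_mul_of_nonneg_left _ hL.le
    linarith
  have h4 : R * L / 2 * ((y / R) ^ 2 - ((y / R) ^ 2) ^ 2 / 2) ≤ R * L / 2 * Real.log (1 + (y / R) ^ 2) := by gcongr
  have h5 : L * (1 + 1 / R) / 2 * y ^ 2 - L * (1 / 24 + 1 / (4 * R ^ 3)) * y ^ 4 =
     L * (y ^ 2 / 2 - y ^ 4 / 24) + R * L / 2 * ((y / R) ^ 2 - ((y / R) ^ 2) ^ 2 / 2) := by
    field_simp
    ring
  linarith

lemma bB_neg_ub (L R y : ℝ) (hL : 0 < L) (hR : 0 < R) (hy : 0 ≤ y) :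
    -bB L (R * L) R y ≤ L * y ^ 3 / 6 := by
  unfold bB
  have h1 := sin_lb y hy
  have h2 := arctan_ub (y / R) (by positivity)
  have h3 : L * (y - y ^ 3 / 6) ≤ L * Real.sin y := by gcongr
  have h4 : R * L * Real.arctan (y / R) ≤ R * L * (y / R) := by gcongr
  have h5 : R * L * (y / R) = L * y := by field_simp
  linarith

lemma bB_neg_lb (L R y : ℝ) (hL : 0 < L) (hR : 0 < R) (hy : 0 ≤ y) :
    L * y ^ 3 * ((1 / 6 - 1 / (3 * R ^ 2)) - y ^ 2 / 120) ≤ -bB L (R * L) R y := by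
  unfold bB
  have h1 := sin_ub y hy
  have h2 := arctan_lb (y / R) (by positivity)
  have h3 : L * Real.sin y ≤ L * (y - y ^ 3 / 6 + y ^ 5 / 120) := by gcongr
  have h4 : R * L * (y / R - (y / R) ^ 3 / 3) ≤ R * L * Real.arctan (y / R) := by gcongr
  have h5 : L * y ^ 3 * ((1 / 6 - 1 / (3 * R ^ 2)) - y ^ 2 / 120) =
      R * L * (y / R - (y / R) ^ 3 / 3) - L * (y - y ^ 3 / 6 + y ^ 5 / 120) := by
    field_simp
    ring
  linarith

lemma cos_bB_ub (b L p y : ℝ) (hL : 0 < L) (hy : 0 ≤ y) (hy1 : y ≤ 1) (hp : 1 / 120 ≤ p)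
    (h1 : L * y ^ 3 * (p - y ^ 2 / 120) ≤ -b) (h2 : -b ≤ L * y ^ 3 / 6) :
    L ^ 2 * p ^ 2 / 2 * y ^ 6 - L ^ 2 * p / 120 * y ^ 8 - L ^ 4 / 31104 * y ^ 12 ≤ 1 - Real.cos b := by
  have hy2 : y ^ 2 ≤ 1 := by nlinarith
  have h0 : 0 ≤ L * y ^ 3 * (p - y ^ 2 / 120) := by
    have : 0 ≤ p - y ^ 2 / 120 := by linarith
    positivity
  have hc := cos_ub (-b) (h0.trans h1)
  rw [Real.cos_neg] at hc
  have h3 : (L * y ^ 3 * (p - y ^ 2 / 120)) ^ 2 ≤ (-b) ^ 2 := by gcongr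
  have h4 : (-b) ^ 4 ≤ (L * y ^ 3 / 6) ^ 4 := by
    have := h0.trans h1
    gcongr
  have h5 : L ^ 2 * p ^ 2 / 2 * y ^ 6 - L ^ 2 * p / 120 * y ^ 8 ≤ (L * y ^ 3 * (p - y ^ 2 / 120)) ^ 2 / 2 := by
    have : 0 ≤ L ^ 2 * y ^ 6 * (y ^ 2 / 120) ^ 2 / 2 := by positivity
    linarith [this, show (L * y ^ 3 * (p - y ^ 2 / 120)) ^ 2 / 2 = L ^ 2 * p ^ 2 / 2 * y ^ 6 - L ^ 2 * p / 120 * y ^ 8 + L ^ 2 * y ^ 6 * (y ^ 2 / 120) ^ 2 / 2 by ring]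
  have h6 : (L * y ^ 3 / 6) ^ 4 / 24 = L ^ 4 / 31104 * y ^ 12 := by ring
  linarith

/-- The polynomial-Gaussian majorant. -/
noncomputable def gMaj (L q p c s y : ℝ) : ℝ :=
  y ^ 0 * Real.exp (-(c / 2) * y ^ 2) + q * (y ^ 4 * Real.exp (-(c / 2) * y ^ 2))
   - L ^ 2 * p ^ 2 / 2 * (y ^ 6 * Real.exp (-(c / 2) * y ^ 2))
   + L ^ 2 * p / 120 * (y ^ 8 * Real.exp (-(c / 2) * y ^ 2))
   + L ^ 4 / 31104 * (y ^ 12 * Real.exp (-(c / 2) * y ^ 2))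
   + q ^ 2 / 2 * (y ^ 8 * Real.exp (-(s * c / 2) * y ^ 2))

lemma ptw_small (L R y q p c : ℝ) (hL : 0 < L) (hR : 0 < R) (hy : 0 ≤ y) (hy1 : y ≤ 1)
    (hq : q = L * (1 / 24 + 1 / (4 * R ^ 3))) (hp : p = 1 / 6 - 1 / (3 * R ^ 2)) (hc : c = L * (1 + 1 / R))
    (hp1 : 1 / 120 ≤ p) (hqc : 2 * q ≤ 0.09 * c) :
    Real.exp (-bA L (R * L) R y) * Real.cos (bB L (R * L) R y) ≤ gMaj L q p c 0.91 y := by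
  have hq0 : 0 < q := by rw [hq]; positivity
  have a1 := bA_ub L R y hL hR
  have a2 := bA_lb L R y hL hR hy
  have b1 := bB_neg_lb L R y hL hR hy
  have b2 := bB_neg_ub L R y hL hR hy
  rw [← hc] at a1 a2
  rw [← hq] at a2
  rw [← hp] at b1
  have hcos := cos_bB_ub _ L p y hL hy hy1 hp1 b1 b2
  have hcos0 : 0 ≤ 1 - Real.cos (bB L (R * L) R y) := by linarith [Real.cos_le_one (bB L (R * L) R y)]
  set G := Real.exp (-(c / 2) * y ^ 2) with hG
  have hG0 : 0 < G := Real.exp_pos _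
  have e1 : G ≤ Real.exp (-bA L (R * L) R y) := by
    rw [hG]; apply Real.exp_le_exp.mpr; linarith
  have e2 : Real.exp (-bA L (R * L) R y) ≤ G * Real.exp (q * y ^ 4) := by
    rw [hG, ← Real.exp_add]; apply Real.exp_le_exp.mpr; linarith
  have e3 := exp_ub (q * y ^ 4) (by positivity)
  have e4 : G * Real.exp (q * y ^ 4) ≤ Real.exp (-(0.91 * c / 2) * y ^ 2) := by
    rw [hG, ← Real.exp_add]; apply Real.exp_le_exp.mpr
    have : y ^ 4 ≤ y ^ 2 := by
      have : y ^ 2 ≤ 1 := by nlinarith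
      nlinarith [sq_nonneg y]
    have : q * y ^ 4 ≤ q * y ^ 2 := by gcongr
    nlinarith [sq_nonneg y]
  have e5 : G * Real.exp (q * y ^ 4) ≤ G * (1 + q * y ^ 4) + (q * y ^ 4) ^ 2 / 2 * Real.exp (-(0.91 * c / 2) * y ^ 2) := by
    calc G * Real.exp (q * y ^ 4) ≤ G * (1 + q * y ^ 4 + (q * y ^ 4) ^ 2 / 2 * Real.exp (q * y ^ 4)) := by gcongr
      _ = G * (1 + q * y ^ 4) + (q * y ^ 4) ^ 2 / 2 * (G * Real.exp (q * y ^ 4)) := by ring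
      _ ≤ _ := by gcongr
  have e6 : Real.exp (-bA L (R * L) R y) * Real.cos (bB L (R * L) R y) =
    Real.exp (-bA L (R * L) R y) - Real.exp (-bA L (R * L) R y) * (1 - Real.cos (bB L (R * L) R y)) := by ring
  have e7 : G * (1 - Real.cos (bB L (R * L) R y)) ≤ Real.exp (-bA L (R * L) R y) * (1 - Real.cos (bB L (R * L) R y)) := by gcongr
  have e8 : G * (L ^ 2 * p ^ 2 / 2 * y ^ 6 - L ^ 2 * p / 120 * y ^ 8 - L ^ 4 / 31104 * y ^ 12) ≤ G * (1 - Real.cos (bB L (R * L) R y)) := by gcongr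
  unfold gMaj
  rw [← hG]
  have e9 : y ^ 0 * G + q * (y ^ 4 * G) - L ^ 2 * p ^ 2 / 2 * (y ^ 6 * G) + L ^ 2 * p / 120 * (y ^ 8 * G)
    + L ^ 4 / 31104 * (y ^ 12 * G) + q ^ 2 / 2 * (y ^ 8 * Real.exp (-(0.91 * c / 2) * y ^ 2)) =
    G * (1 + q * y ^ 4) + (q * y ^ 4) ^ 2 / 2 * Real.exp (-(0.91 * c / 2) * y ^ 2)
     - G * (L ^ 2 * p ^ 2 / 2 * y ^ 6 - L ^ 2 * p / 120 * y ^ 8 - L ^ 4 / 31104 * y ^ 12) := by ring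
  rw [e9]
  linarith

lemma gMaj_nonneg (L q p c s y : ℝ) (hL : 99 ≤ L) (hq : 0 ≤ q) (hp : 0 ≤ p) (hp1 : p ≤ 1 / 6) (hy : 1 ≤ y) :
    0 ≤ gMaj L q p c s y := by
  unfold gMaj
  set G := Real.exp (-(c / 2) * y ^ 2) with hG
  have hG0 : 0 < G := Real.exp_pos _
  have h1 : L ^ 2 * p ^ 2 / 2 * (y ^ 6 * G) ≤ L ^ 4 / 31104 * (y ^ 12 * G) := by
    have : y ^ 6 ≤ y ^ 12 := pow_le_pow_right₀ hy (by norm_num)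
    have : L ^ 2 * p ^ 2 / 2 ≤ L ^ 4 / 31104 := by
      have h3 : p ^ 2 ≤ (1 / 6) ^ 2 := by gcongr
      have h4 : (99 : ℝ) ^ 2 ≤ L ^ 2 := by gcongr
      have h5 : L ^ 2 * p ^ 2 ≤ L ^ 2 * (1 / 6) ^ 2 := by gcongr
      have h6 : L ^ 2 * 99 ^ 2 ≤ L ^ 2 * L ^ 2 := by gcongr
      nlinarith
    gcongr
  have h2 : 0 ≤ y ^ 0 * G + q * (y ^ 4 * G) + L ^ 2 * p / 120 * (y ^ 8 * G)
    + q ^ 2 / 2 * (y ^ 8 * Real.exp (-(s * c / 2) * y ^ 2)) := by positivity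
  linarith

lemma ptw_large (L R y : ℝ) (hR : 4.6 ≤ R) (hRL : R ≤ L) (hy : 1 ≤ y) :
    Real.exp (-bA L (R * L) R y) * Real.cos (bB L (R * L) R y) ≤ Real.exp (-(2 * L / R)) * (1 + (y / R) ^ 2)⁻¹ := by
  have hR0 : 0 < R := by linarith
  have hL0 : 0 < L := by linarith
  have hx : 0 < 1 + (y / R) ^ 2 := by positivity
  have h1 : Real.exp (-bA L (R * L) R y) * Real.cos (bB L (R * L) R y) ≤ Real.exp (-bA L (R * L) R y) * 1 := by
    gcongr; exact Real.cos_le_one _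
  refine h1.trans ?_
  rw [mul_one, ← Real.exp_log (inv_pos.mpr hx), ← Real.exp_add, Real.exp_le_exp, Real.log_inv]
  unfold bA
  have hlog : 0 ≤ Real.log (1 + (y / R) ^ 2) := Real.log_nonneg (by nlinarith [sq_nonneg (y / R)])
  have hRL2 : 1 ≤ R * L / 2 := by nlinarith
  suffices h : 2 * L / R ≤ L * (1 - Real.cos y) + (R * L / 2 - 1) * Real.log (1 + (y / R) ^ 2) by linarith
  rcases le_or_gt y Real.pi with hpi | hpi
  · have hc : Real.cos y ≤ Real.cos 1 := Real.cos_le_cos_of_nonneg_of_le_pi (by norm_num) hpi hy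
    have hc1 := Real.cos_one_le
    have h3 : 2 * L / R ≤ L * (4 / 9) := by
      rw [div_le_iff₀ hR0]
      nlinarith
    have h4 : L * (4 / 9) ≤ L * (1 - Real.cos y) := by gcongr; linarith
    have h5 : 0 ≤ (R * L / 2 - 1) * Real.log (1 + (y / R) ^ 2) := mul_nonneg (by linarith) hlog
    linarith
  · have hy3 : 3 < y := lt_trans Real.pi_gt_three hpi
    have hc : 0 ≤ L * (1 - Real.cos y) := mul_nonneg hL0.le (by linarith [Real.cos_le_one y])
    have hl := Real.one_sub_inv_le_log_of_pos hx
    have h6 : 9 / (R ^ 2 + 9) ≤ 1 - (1 + (y / R) ^ 2)⁻¹ := by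
      have : 1 - (1 + (y / R) ^ 2)⁻¹ = y ^ 2 / (R ^ 2 + y ^ 2) := by
        have : R ^ 2 + y ^ 2 ≠ 0 := by positivity
        field_simp
        ring
      rw [this, div_le_div_iff₀ (by positivity) (by positivity)]
      have : 9 ≤ y ^ 2 := by nlinarith
      nlinarith [sq_nonneg R, mul_le_mul_of_nonneg_left this (sq_nonneg R)]
    have h7 : (R * L / 2 - 1) * (9 / (R ^ 2 + 9)) ≤ (R * L / 2 - 1) * Real.log (1 + (y / R) ^ 2) := by
      apply mul_le_mul_of_nonneg_left _ (by linarith)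
      linarith
    have h8 : 2 * L / R ≤ (R * L / 2 - 1) * (9 / (R ^ 2 + 9)) := by
      rw [← mul_div_assoc, div_le_div_iff₀ hR0 (by positivity)]
      have : 21 ≤ R ^ 2 := by nlinarith
      nlinarith [mul_le_mul_of_nonneg_left this hL0.le]
    linarith

lemma ptw (L R y q p c : ℝ) (hL : 99 ≤ L) (hR : 4.6 ≤ R) (hRL : R ≤ L)
    (hq : q = L * (1 / 24 + 1 / (4 * R ^ 3))) (hp : p = 1 / 6 - 1 / (3 * R ^ 2)) (hc : c = L * (1 + 1 / R))
    (hp1 : 1 / 120 ≤ p) (hp2 : p ≤ 1 / 6) (hqc : 2 * q ≤ 0.09 * c) :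
    Real.exp (-bA L (R * L) R y) * Real.cos (bB L (R * L) R y) ≤
      gMaj L q p c 0.91 y + Real.exp (-(2 * L / R)) * (1 + (y / R) ^ 2)⁻¹ := by
  have hR0 : 0 < R := by linarith
  have hL0 : 0 < L := by linarith
  have hq0 : 0 ≤ q := by rw [hq]; positivity
  have main : ∀ y : ℝ, 0 ≤ y → Real.exp (-bA L (R * L) R y) * Real.cos (bB L (R * L) R y) ≤
      gMaj L q p c 0.91 y + Real.exp (-(2 * L / R)) * (1 + (y / R) ^ 2)⁻¹ := by
    intro y hy
    rcases le_total y 1 with h | h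
    · have h1 := ptw_small L R y q p c hL0 hR0 hy h hq hp hc hp1 hqc
      have : 0 ≤ Real.exp (-(2 * L / R)) * (1 + (y / R) ^ 2)⁻¹ := by positivity
      linarith
    · have h1 := ptw_large L R y hR hRL h
      have h2 := gMaj_nonneg L q p c 0.91 y hL hq0 (by linarith) hp2 h
      linarith
  rcases le_total 0 y with h | h
  · exact main y h
  · have h1 := main (-y) (by linarith)
    have e1 : bA L (R * L) R (-y) = bA L (R * L) R y := by
      unfold bA; rw [Real.cos_neg, neg_div, neg_sq]
    have e2 : bB L (R * L) R (-y) = -bB L (R * L) R y := by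
      unfold bB; rw [Real.sin_neg, neg_div, Real.arctan_neg]; ring
    have e3 : gMaj L q p c 0.91 (-y) = gMaj L q p c 0.91 y := by
      unfold gMaj
      rw [neg_sq, Even.neg_pow (by decide : Even 4), Even.neg_pow (by decide : Even 6),
        Even.neg_pow (by decide : Even 8), Even.neg_pow (by decide : Even 12), pow_zero, pow_zero]
    rw [e1, e2, e3, Real.cos_neg, neg_div, neg_sq] at h1
    exact h1

lemma gMaj_int (L q p c s : ℝ) (hc : 0 < c) (hs : 0 < s) :
    MeasureTheory.Integrable (gMaj L q p c s) ∧ ∫ y, gMaj L q p c s y =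
     √(2 * Real.pi / c) * (1 + q * (3 / c ^ 2) - L ^ 2 * p ^ 2 / 2 * (15 / c ^ 3) + L ^ 2 * p / 120 * (105 / c ^ 4)
       + L ^ 4 / 31104 * (10395 / c ^ 6)) + q ^ 2 / 2 * (105 / (s * c) ^ 4) * √(2 * Real.pi / (s * c)) := by
  have i0 := gm_int c hc 0
  have i4 := (gm_int c hc 4).const_mul q
  have i6 := (gm_int c hc 6).const_mul (L ^ 2 * p ^ 2 / 2)
  have i8 := (gm_int c hc 8).const_mul (L ^ 2 * p / 120)
  have i12 := (gm_int c hc 12).const_mul (L ^ 4 / 31104)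
  have j8 := (gm_int (s * c) (by positivity) 8).const_mul (q ^ 2 / 2)
  have k1 := i0.fun_add i4
  have k2 : MeasureTheory.Integrable (fun y : ℝ => (y ^ 0 * Real.exp (-(c / 2) * y ^ 2) + q * (y ^ 4 * Real.exp (-(c / 2) * y ^ 2)))
    - L ^ 2 * p ^ 2 / 2 * (y ^ 6 * Real.exp (-(c / 2) * y ^ 2))) := k1.sub i6
  have k3 := k2.fun_add i8
  have k4 := k3.fun_add i12
  refine ⟨k4.fun_add j8, ?_⟩
  unfold gMaj
  rw [MeasureTheory.integral_add k4 j8, MeasureTheory.integral_add k3 i12,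
    MeasureTheory.integral_add k2 i8, MeasureTheory.integral_sub k1 i6, MeasureTheory.integral_add i0 i4]
  simp only [MeasureTheory.integral_const_mul]
  rw [gm_0, gm_4 c hc, gm_6 c hc, gm_8 c hc, gm_12 c hc, gm_8 (s * c) (by positivity)]
  ring

/-! ### Final inequality -/

lemma tail_bd (L R : ℝ) (hL : 0 < L) (hR : 0 < R) (h1 : R ^ 2 ≤ L) (h2 : 20 * R ≤ L) :
    5 * Real.exp (-(2 * L / R)) * R * L ^ 2 ≤ 0.0005 := by
  obtain ⟨X, hX⟩ : ∃ X, X = L / R := ⟨_, rfl⟩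
  have hLX : L = R * X := by rw [hX]; field_simp
  have hX20 : 20 ≤ X := by rw [hX, le_div_iff₀ hR]; exact h2
  have hRX : R ≤ X := by rw [hX, le_div_iff₀ hR]; nlinarith
  have hX0 : 0 < X := by linarith
  have he := Real.pow_div_factorial_le_exp (2 * X) (by positivity) 12
  rw [show 2 * L / R = 2 * X by rw [hX]; ring, Real.exp_neg]
  have h3 : R * L ^ 2 ≤ X ^ 5 := by
    calc R * L ^ 2 = R ^ 3 * X ^ 2 := by rw [hLX]; ring
      _ ≤ X ^ 3 * X ^ 2 := by gcongr
      _ = X ^ 5 := by ring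
  have hE := Real.exp_pos (2 * X)
  have h4 : (20 : ℝ) ^ 7 ≤ X ^ 7 := by gcongr
  have h5 : 5 * X ^ 5 ≤ 0.0005 * Real.exp (2 * X) := by
    have : 5 * X ^ 5 ≤ 0.0005 * ((2 * X) ^ 12 / (Nat.factorial 12 : ℕ)) := by
      rw [show (2 * X) ^ 12 = 4096 * X ^ 5 * X ^ 7 by ring, show Nat.factorial 12 = 479001600 by rfl]
      push_cast
      have h6 : X ^ 5 * 20 ^ 7 ≤ X ^ 5 * X ^ 7 := by gcongr
      have h7 : 0 < X ^ 5 := by positivity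
      linarith
    linarith
  calc 5 * (Real.exp (2 * X))⁻¹ * R * L ^ 2 = 5 * (R * L ^ 2) / Real.exp (2 * X) := by field_simp
    _ ≤ 5 * X ^ 5 / Real.exp (2 * X) := by gcongr
    _ ≤ 0.0005 := by rw [div_le_iff₀ hE]; exact h5

lemma main_coef (r p q w : ℝ) (hr0 : 0 < r) (hr : r ≤ 1 / 4.6) (hp : p = 1 / 6 - r ^ 2 / 3) (hq : q = 1 / 24 + r ^ 3 / 4)
    (hw : w = 1 + r) : 3 * q - 7.5 * p ^ 2 / w ≤ -0.0073 := by
  have hw0 : 0 < w := by linarith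
  have h : (3 * q + 0.0073) * w ≤ 7.5 * p ^ 2 := by
    rw [hp, hq, hw]
    have h2 : r ^ 2 ≤ (1 / 4.6) * r := by nlinarith
    have h3 : r ^ 3 ≤ (1 / 4.6) ^ 2 * r := by nlinarith
    have h4 : 0 ≤ r ^ 4 := by positivity
    norm_num at *
    nlinarith
  have : 3 * q + 0.0073 ≤ 7.5 * p ^ 2 / w := by rw [le_div_iff₀ hw0]; exact h
  linarith

set_option maxHeartbeats 1000000 in
lemma final_ineq (L R q p c : ℝ) (hL : 99 ≤ L) (hR : 4.6 ≤ R) (h1 : R ^ 2 ≤ L) (h2 : 20 * R ≤ L)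
    (hq : q = L * (1 / 24 + 1 / (4 * R ^ 3))) (hp : p = 1 / 6 - 1 / (3 * R ^ 2)) (hc : c = L * (1 + 1 / R)) :
    √(2 * Real.pi / c) * (1 + q * (3 / c ^ 2) - L ^ 2 * p ^ 2 / 2 * (15 / c ^ 3) + L ^ 2 * p / 120 * (105 / c ^ 4)
       + L ^ 4 / 31104 * (10395 / c ^ 6)) + q ^ 2 / 2 * (105 / (0.91 * c) ^ 4) * √(2 * Real.pi / (0.91 * c))
       + Real.exp (-(2 * L / R)) * (R * Real.pi) ≤ √(2 * Real.pi / c) := by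
  have hR0 : 0 < R := by linarith
  have hL0 : 0 < L := by linarith
  obtain ⟨r, hr⟩ : ∃ r, r = 1 / R := ⟨_, rfl⟩
  have hr0 : 0 < r := by rw [hr]; positivity
  have hr1 : r ≤ 1 / 4.6 := by rw [hr]; gcongr
  obtain ⟨w, hw⟩ : ∃ w, w = 1 + r := ⟨_, rfl⟩
  obtain ⟨q', hq'⟩ : ∃ q', q' = 1 / 24 + r ^ 3 / 4 := ⟨_, rfl⟩
  have hqq : q = L * q' := by rw [hq, hq', hr]; congr 2; field_simp
  have hpp : p = 1 / 6 - r ^ 2 / 3 := by rw [hp, hr]; congr 1; field_simp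
  have hcc : c = L * w := by rw [hc, hw, hr]
  have hw1 : 1 ≤ w := by linarith
  have hw2 : w ≤ 1.22 := by rw [hw]; norm_num at *; linarith
  have hw0 : 0 < w := by linarith
  have hc0 : 0 < c := by rw [hcc]; positivity
  have hr2 : r ^ 2 ≤ (1 / 4.6) ^ 2 := by gcongr
  have hr3 : r ^ 3 ≤ (1 / 4.6) ^ 3 := by gcongr
  have hq0 : 0 < q' := by rw [hq']; positivity
  have hq1 : q' ≤ 0.04424 := by rw [hq']; norm_num at *; linarith
  have hp0 : 0 ≤ p := by rw [hpp]; norm_num at *; linarith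
  have hp1 : p ≤ 1 / 6 := by rw [hpp]; linarith [sq_nonneg r]
  have hmain := main_coef r p q' w hr0 hr1 hpp hq' hw
  obtain ⟨A, hA⟩ : ∃ A, A = √(2 * Real.pi / c) := ⟨_, rfl⟩
  have hpi := Real.pi_gt_three
  have hpi2 := Real.pi_lt_d2
  have hA0 : 0 < A := by rw [hA]; positivity
  have hAL : 1 / L ≤ A := by
    rw [hA]
    apply Real.le_sqrt_of_sq_le
    rw [div_pow, one_pow, div_le_div_iff₀ (by positivity) hc0, hcc]
    nlinarith [mul_pos hL0 hL0]
  have hAs : √(2 * Real.pi / (0.91 * c)) ≤ 1.05 * A := by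
    rw [hA]
    apply Real.sqrt_le_iff.mpr
    refine ⟨by positivity, ?_⟩
    rw [mul_pow, Real.sq_sqrt (by positivity)]
    rw [show 2 * Real.pi / (0.91 * c) = (1 / 0.91) * (2 * Real.pi / c) by field_simp]
    gcongr
    norm_num
  have htail : Real.exp (-(2 * L / R)) * (R * Real.pi) ≤ A * (0.0005 / (L * w ^ 2)) := by
    have ht := tail_bd L R hL0 hR0 h1 h2
    have hE := Real.exp_pos (-(2 * L / R))
    calc Real.exp (-(2 * L / R)) * (R * Real.pi) = (Real.exp (-(2 * L / R)) * R * L ^ 2) * (Real.pi * w ^ 2) * (1 / L * (1 / (L * w ^ 2))) := by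
          field_simp
      _ ≤ (Real.exp (-(2 * L / R)) * R * L ^ 2) * (3.15 * 1.22 ^ 2) * (A * (1 / (L * w ^ 2))) := by gcongr
      _ ≤ 0.0005 * (A * (1 / (L * w ^ 2))) := by
          gcongr
          have : 0 < Real.exp (-(2 * L / R)) * R * L ^ 2 := by positivity
          norm_num at *
          linarith
      _ = A * (0.0005 / (L * w ^ 2)) := by ring
  have hT4 : q ^ 2 / 2 * (105 / (0.91 * c) ^ 4) * √(2 * Real.pi / (0.91 * c)) ≤ A * ((1 / (L * w ^ 2)) * (0.158 / L)) := by
    calc q ^ 2 / 2 * (105 / (0.91 * c) ^ 4) * √(2 * Real.pi / (0.91 * c)) ≤ q ^ 2 / 2 * (105 / (0.91 * c) ^ 4) * (1.05 * A) := by gcongr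
      _ = A * ((1 / (L * w ^ 2)) * ((105 * 1.05 / (2 * 0.91 ^ 4) * q' ^ 2 * (1 / w ^ 2)) / L)) := by
          rw [hqq, hcc]
          field_simp
      _ ≤ A * ((1 / (L * w ^ 2)) * ((105 * 1.05 / (2 * 0.91 ^ 4) * 0.04424 ^ 2 * (1 / 1 ^ 2)) / L)) := by gcongr
      _ ≤ _ := by gcongr; norm_num
  have hT : 1 + q * (3 / c ^ 2) - L ^ 2 * p ^ 2 / 2 * (15 / c ^ 3) + L ^ 2 * p / 120 * (105 / c ^ 4)
       + L ^ 4 / 31104 * (10395 / c ^ 6) = 1 + (1 / (L * w ^ 2)) * ((3 * q' - 7.5 * p ^ 2 / w) + (0.875 * p / w ^ 2) / L + (10395 / 31104 / w ^ 4) / L) := by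
    rw [hqq, hcc]
    field_simp
    ring
  have hT2 : (0.875 * p / w ^ 2) / L ≤ 0.146 / L := by
    gcongr
    rw [div_le_iff₀ (by positivity)]
    have : 1 ≤ w ^ 2 := one_le_pow₀ hw1
    nlinarith
  have hT3 : (10395 / 31104 / w ^ 4) / L ≤ 0.3343 / L := by
    gcongr
    rw [div_le_iff₀ (by positivity)]
    have : 1 ≤ w ^ 4 := one_le_pow₀ hw1
    nlinarith
  have hS : (3 * q' - 7.5 * p ^ 2 / w) + (0.875 * p / w ^ 2) / L + (10395 / 31104 / w ^ 4) / L + 0.158 / L + 0.0005 ≤ 0 := by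
    have h6 : 0.146 / L + 0.3343 / L + 0.158 / L ≤ 0.0066 := by
      rw [← add_div, ← add_div, div_le_iff₀ hL0]
      linarith
    linarith
  rw [hT, ← hA]
  have hS2 : A * (1 / (L * w ^ 2)) * ((3 * q' - 7.5 * p ^ 2 / w) + (0.875 * p / w ^ 2) / L + (10395 / 31104 / w ^ 4) / L + 0.158 / L + 0.0005) ≤ 0 :=
    mul_nonpos_of_nonneg_of_nonpos (by positivity) hS
  have e : A * (1 / (L * w ^ 2)) * ((3 * q' - 7.5 * p ^ 2 / w) + (0.875 * p / w ^ 2) / L + (10395 / 31104 / w ^ 4) / L + 0.158 / L + 0.0005)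
     = A * (1 + (1 / (L * w ^ 2)) * ((3 * q' - 7.5 * p ^ 2 / w) + (0.875 * p / w ^ 2) / L + (10395 / 31104 / w ^ 4) / L)) - A
      + A * ((1 / (L * w ^ 2)) * (0.158 / L)) + A * (0.0005 / (L * w ^ 2)) := by ring
  linarith

lemma int_bound (L R q p c : ℝ) (hL : 99 ≤ L) (hR : 4.6 ≤ R) (h1 : R ^ 2 ≤ L) (h2 : 20 * R ≤ L)
    (hq : q = L * (1 / 24 + 1 / (4 * R ^ 3))) (hp : p = 1 / 6 - 1 / (3 * R ^ 2)) (hc : c = L * (1 + 1 / R))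
    (hi : MeasureTheory.Integrable (fun y : ℝ => Real.exp (-bA L (R * L) R y) * Real.cos (bB L (R * L) R y))) :
    ∫ y : ℝ, Real.exp (-bA L (R * L) R y) * Real.cos (bB L (R * L) R y) ≤ √(2 * Real.pi / c) := by
  have hR0 : 0 < R := by linarith
  have hL0 : 0 < L := by linarith
  have hc0 : 0 < c := by rw [hc]; positivity
  have hR2 : 21 ≤ R ^ 2 := by nlinarith
  have hR3 : 90 ≤ R ^ 3 := by nlinarith
  have hp2 : p ≤ 1 / 6 := by
    have : 0 ≤ 1 / (3 * R ^ 2) := by positivity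
    linarith
  have hp1 : 1 / 120 ≤ p := by
    have : 1 / (3 * R ^ 2) ≤ 1 / (3 * 21) := by gcongr
    linarith
  have hqc : 2 * q ≤ 0.09 * c := by
    have e1 : 1 / (4 * R ^ 3) ≤ 1 / (4 * 90) := by gcongr
    have e2 : 0 < 1 / R := by positivity
    have e3 : L * (1 / 24 + 1 / (4 * R ^ 3)) ≤ L * 0.0445 := by
      gcongr
      norm_num at e1 ⊢
      linarith
    have e4 : L * 1 ≤ L * (1 + 1 / R) := by gcongr; linarith
    rw [hq, hc]
    linarith
  obtain ⟨gi, gv⟩ := gMaj_int L q p c 0.91 hc0 (by norm_num)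
  have ti := (cauchy_int R hR0).const_mul (Real.exp (-(2 * L / R)))
  have tv : ∫ y : ℝ, Real.exp (-(2 * L / R)) * (1 + (y / R) ^ 2)⁻¹ = Real.exp (-(2 * L / R)) * (R * Real.pi) := by
    rw [MeasureTheory.integral_const_mul, MeasureTheory.Measure.integral_comp_div (fun y : ℝ => (1 + y ^ 2)⁻¹) R,
      integral_univ_inv_one_add_sq, abs_of_pos hR0, smul_eq_mul]
  have hm := MeasureTheory.integral_mono hi (gi.fun_add ti)
    (fun y => ptw L R y q p c hL hR (by linarith) hq hp hc hp1 hp2 hqc)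
  rw [MeasureTheory.integral_add gi ti, gv, tv] at hm
  exact hm.trans (final_ineq L R q p c hL hR h1 h2 hq hp hc)

lemma large_case (n : ℕ) (hn : 457 ≤ n) : (Bell n : ℝ) ≤ E n := by
  obtain ⟨R, hRd⟩ : ∃ R, R = lambertW (n + 1) := ⟨_, rfl⟩
  have hspec := lw_spec n
  have hR46 : 4.6 ≤ R := by
    have h0 := exp_upper_chk 457 46 10 80 20922789888000 (by norm_num) (by norm_num) (by norm_num)
      (by decide +kernel) (by decide +kernel)
    have h1 : ((46 : ℕ) : ℝ) / ((10 : ℕ) : ℝ) = 4.6 := by norm_num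
    rw [h1] at h0
    rw [hRd]
    refine lw_ge n 4.6 (by norm_num) (h0.trans ?_)
    have : (457 : ℝ) ≤ n := by exact_mod_cast hn
    push_cast
    linarith
  rw [← hRd] at hspec
  obtain ⟨L, hL⟩ : ∃ L, L = Real.exp R := ⟨_, rfl⟩
  have hR0 : 0 < R := by linarith
  have hexp : (99 : ℝ) ≤ Real.exp 4.6 := by
    have := Real.sum_le_exp_of_nonneg (x := 4.6) (by norm_num) 14
    refine le_trans ?_ this
    norm_num [Finset.sum_range_succ, Nat.factorial]
  have hLt : 99 * (1 + (R - 4.6) + (R - 4.6) ^ 2 / 2) ≤ L := by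
    have e1 := Real.quadratic_le_exp_of_nonneg (x := R - 4.6) (by linarith)
    have e2 : L = Real.exp 4.6 * Real.exp (R - 4.6) := by rw [hL, ← Real.exp_add]; congr 1; ring
    rw [e2]
    have : 0 ≤ R - 4.6 := by linarith
    gcongr
  have hL99 : 99 ≤ L := by nlinarith [sq_nonneg (R - 4.6)]
  have hL20 : 20 * R ≤ L := by nlinarith [sq_nonneg (R - 4.6)]
  have hL2 : R ^ 2 ≤ L := by nlinarith [sq_nonneg (R - 4.6)]
  have hL0 : 0 < L := by linarith
  obtain ⟨hi, hB⟩ := bell_real R hR0 n (by omega)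
  rw [← hspec, ← hL] at hi hB
  have hI := int_bound L R _ _ _ hL99 hR46 hL2 hL20 rfl rfl rfl hi
  have hsq : √(2 * Real.pi * (n + 1) * (R + 1)) = R * √(2 * Real.pi * (L * (1 + 1 / R))) := by
    rw [← hspec, ← hL, show 2 * Real.pi * (R * L) * (R + 1) = R ^ 2 * (2 * Real.pi * (L * (1 + 1 / R))) by field_simp,
      Real.sqrt_mul (by positivity), Real.sqrt_sq hR0.le]
  have hc0 : 0 < L * (1 + 1 / R) := by positivity
  have hs2 : √(2 * Real.pi / (L * (1 + 1 / R))) = 2 * Real.pi / √(2 * Real.pi * (L * (1 + 1 / R))) := by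
    generalize L * (1 + 1 / R) = c at hc0
    have h3 : √(2 * Real.pi * c) ≠ 0 := by positivity
    rw [eq_div_iff h3, ← Real.sqrt_mul (by positivity), show 2 * Real.pi / c * (2 * Real.pi * c) = (2 * Real.pi) ^ 2 by field_simp,
      Real.sqrt_sq (by positivity)]
  have hE : E n = n.factorial * Real.exp (L - 1) / (2 * Real.pi * R ^ (n + 1)) * √(2 * Real.pi / (L * (1 + 1 / R))) := by
    unfold E
    rw [← hRd, ← hL, hsq, hs2]
    have h3 : √(2 * Real.pi * (L * (1 + 1 / R))) ≠ 0 := by positivity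
    generalize √(2 * Real.pi * (L * (1 + 1 / R))) = S at h3
    field_simp
    rw [pow_succ]
  rw [hB, hE]
  gcongr

theorem stmt_2 (n : ℕ) (hn : 311 ≤ n) : (Bell n : ℝ) ≤ E n := by
  rcases lt_or_ge n 457 with h | h
  · exact small_case n hn h
  · exact large_case n h
end

section
/- For every integer n ≥ 1, one has (1 − 1/(2n))·E_n^* ≤ E_n ≤ E_n^*. -/
/-- `E* n = exp(e^{W(n)} + n W(n) - (n+1)) / sqrt(1 + W(n))`. -/
noncomputable def Estar (n : ℕ) : ℝ :=
  Real.exp (Real.exp (lambertW n) + n * lambertW n - (n + 1)) / Real.sqrt (1 + lambertW n)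

theorem lamW_exists (x : ℝ) (hx : 0 ≤ x) : ∃ y : ℝ, 0 ≤ y ∧ y * Real.exp y = x := by
  have hc : ContinuousOn (fun y : ℝ => y * Real.exp y) (Set.Icc 0 x) := by fun_prop
  have h := intermediate_value_Icc hx hc
  have hm : x ∈ Set.Icc ((0:ℝ) * Real.exp 0) (x * Real.exp x) := by
    refine ⟨by simpa using hx, ?_⟩
    have : 1 ≤ Real.exp x := Real.one_le_exp hx
    nlinarith
  obtain ⟨y, hy, hy2⟩ := h hm
  exact ⟨y, hy.1, hy2⟩

theorem lamW_spec (x : ℝ) (hx : 0 < x) :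
    0 < lambertW x ∧ lambertW x * Real.exp (lambertW x) = x := by
  have h : lambertW x * Real.exp (lambertW x) = x := by
    have := Function.invFun_eq (f := fun y : ℝ => y * Real.exp y) (b := x)
      (by obtain ⟨y, _, h⟩ := lamW_exists x hx.le; exact ⟨y, h⟩)
    exact this
  refine ⟨?_, h⟩
  by_contra hh
  push Not at hh
  have := Real.exp_pos (lambertW x)
  nlinarith

theorem stirl_lower (n : ℕ) :
    Real.log Real.pi / 2 ≤ Real.log (Stirling.stirlingSeq (n + 1)) := by
  have h1 : Filter.Tendsto (Stirling.stirlingSeq ∘ Nat.succ) Filter.atTop (nhds (Real.sqrt Real.pi)) :=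
    Stirling.tendsto_stirlingSeq_sqrt_pi.comp (Filter.tendsto_add_atTop_nat 1)
  have h2 := Stirling.stirlingSeq'_antitone.le_of_tendsto h1 n
  rw [← Real.log_sqrt Real.pi_pos.le]
  exact Real.log_le_log (Real.sqrt_pos.mpr Real.pi_pos) h2

theorem stirl_upper (n : ℕ) :
    Real.log (Stirling.stirlingSeq (n + 1)) ≤ Real.log Real.pi / 2 + 1 / (12 * ((n:ℝ) + 1)) := by
  have h1 : Filter.Tendsto (Stirling.stirlingSeq ∘ Nat.succ) Filter.atTop (nhds (Real.sqrt Real.pi)) :=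
    Stirling.tendsto_stirlingSeq_sqrt_pi.comp (Filter.tendsto_add_atTop_nat 1)
  have h2 : Filter.Tendsto (fun k : ℕ => Real.log (Stirling.stirlingSeq (k + 1)) - 1 / 12 * (1 / ((k:ℝ) + 1)))
      Filter.atTop (nhds (Real.log (Real.sqrt Real.pi) - 1 / 12 * 0)) :=
    (h1.log (Real.sqrt_pos.mpr Real.pi_pos).ne').sub
      (tendsto_one_div_add_atTop_nhds_zero_nat.const_mul _)
  have hm : Monotone (fun k : ℕ => Real.log (Stirling.stirlingSeq (k + 1)) - 1 / 12 * (1 / ((k:ℝ) + 1))) := by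
    refine monotone_nat_of_le_succ fun k => ?_
    have := Stirling.log_stirlingSeq_sdiff_le (k + 1)
    have e : 1 / (12 * ((k + 1 : ℕ):ℝ) * (((k + 1 : ℕ):ℝ) + 1))
      = 1 / 12 * (1 / ((k:ℝ) + 1)) - 1 / 12 * (1 / (((k + 1 : ℕ):ℝ) + 1)) := by
      push_cast
      field_simp
      ring
    rw [e] at this
    linarith
  have h3 := hm.ge_of_tendsto h2 n
  rw [Real.log_sqrt Real.pi_pos.le] at h3
  have e : 1 / (12 * ((n:ℝ) + 1)) = 1 / 12 * (1 / ((n:ℝ) + 1)) := by field_simp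
  rw [e]
  linarith

theorem hderiv (n a y : ℝ) :
    HasDerivAt (fun y : ℝ => Real.exp y + n * y - y * Real.exp y + a * (y * Real.exp y - n) ^ 2)
      ((y * Real.exp y - n) * (2 * a * ((1 + y) * Real.exp y) - 1)) y := by
  have h1 := Real.hasDerivAt_exp y
  have h2 := (hasDerivAt_id y).mul h1
  have h3 := ((h1.add ((hasDerivAt_id y).const_mul n)).sub h2).add
    (((h2.sub_const n).pow 2).const_mul a)
  refine HasDerivAt.congr_deriv (f := fun y : ℝ => Real.exp y + n * y - y * Real.exp y + a * (y * Real.exp y - n) ^ 2) h3 ?_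
  simp only [id, Pi.mul_apply]
  push_cast
  ring

theorem gbounds (n w R : ℝ) (hn : 0 < n) (hw : 0 < w) (hwR : w ≤ R)
    (ew : w * Real.exp w = n) (eR : R * Real.exp R = n + 1) :
    1 - R / (1 + R) / (2 * n) ≤ Real.exp R - Real.exp w + n * (R - w) ∧
    Real.exp R - Real.exp w + n * (R - w) ≤ 1 - w / (1 + w) / (2 * (n + 1)) := by
  have key : ∀ y, y ∈ interior (Set.Icc w R) → 0 < y ∧ w ≤ y ∧ y ≤ R ∧ n ≤ y * Real.exp y ∧ y * Real.exp y ≤ n + 1 := by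
    intro y hy
    have hy := interior_subset hy
    have hy0 : 0 < y := hw.trans_le hy.1
    refine ⟨hy0, hy.1, hy.2, ?_, ?_⟩
    · rw [← ew]
      exact mul_le_mul hy.1 (Real.exp_le_exp.mpr hy.1) (Real.exp_pos _).le hy0.le
    · rw [← eR]
      exact mul_le_mul hy.2 (Real.exp_le_exp.mpr hy.2) (Real.exp_pos _).le (by linarith)
  constructor
  · have hm := monotoneOn_of_deriv_nonneg (convex_Icc w R)
      (f := fun y : ℝ => Real.exp y + n * y - y * Real.exp y + (R / (1 + R) / (2 * n)) * (y * Real.exp y - n) ^ 2)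
      (by fun_prop) (by fun_prop) (by
        intro y hy
        obtain ⟨h0, h1, h2, h3, h4⟩ := key y hy
        rw [(hderiv n _ y).deriv]
        refine mul_nonneg (by linarith) ?_
        have : 2 * (R / (1 + R) / (2 * n)) * ((1 + y) * Real.exp y)
          = (R * (1 + y) * Real.exp y) / ((1 + R) * n) := by
          have : 1 + R ≠ 0 := by linarith
          field_simp
        rw [this, sub_nonneg, le_div_iff₀ (by nlinarith)]
        nlinarith [Real.exp_pos y, mul_nonneg (sub_nonneg.2 h2) (Real.exp_pos y).le])
    have := hm (Set.left_mem_Icc.2 hwR) (Set.right_mem_Icc.2 hwR) hwR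
    simp only [ew, eR] at this
    ring_nf at this ⊢
    linarith
  · have hm := antitoneOn_of_deriv_nonpos (convex_Icc w R)
      (f := fun y : ℝ => Real.exp y + n * y - y * Real.exp y + (w / (1 + w) / (2 * (n + 1))) * (y * Real.exp y - n) ^ 2)
      (by fun_prop) (by fun_prop) (by
        intro y hy
        obtain ⟨h0, h1, h2, h3, h4⟩ := key y hy
        rw [(hderiv n _ y).deriv]
        refine mul_nonpos_of_nonneg_of_nonpos (by linarith) ?_
        have : 2 * (w / (1 + w) / (2 * (n + 1))) * ((1 + y) * Real.exp y)
          = (w * (1 + y) * Real.exp y) / ((1 + w) * (n + 1)) := by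
          have : 1 + w ≠ 0 := by linarith
          field_simp
        rw [this, sub_nonpos, div_le_iff₀ (by nlinarith)]
        nlinarith [Real.exp_pos y, mul_nonneg (sub_nonneg.2 h1) (Real.exp_pos y).le])
    have := hm (Set.left_mem_Icc.2 hwR) (Set.right_mem_Icc.2 hwR) hwR
    simp only [ew, eR] at this
    have e : (n + 1 - n) ^ 2 = 1 := by ring
    rw [e] at this
    simp only [sub_self] at this
    linarith

theorem logdiff (n : ℕ) (hn : 1 ≤ n) (w R : ℝ) (hw : 0 < w) (hR : 0 < R)
    (ew : w * Real.exp w = n) (eR : R * Real.exp R = n + 1)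
    (hw' : lambertW n = w) (hR' : lambertW (n + 1) = R) :
    0 < E n ∧ 0 < Estar n ∧ Real.log (E n) - Real.log (Estar n) =
      (Real.log (Stirling.stirlingSeq (n + 1)) - Real.log Real.pi / 2)
      + (Real.exp R - Real.exp w + n * (R - w) - 1)
      - (Real.log (1 + R) - Real.log (1 + w)) / 2 := by
  have hn0 : (0:ℝ) < n := by exact_mod_cast hn
  have hpi := Real.pi_pos
  have hf : (0:ℝ) < (n.factorial : ℝ) := by exact_mod_cast n.factorial_pos
  have lR : Real.log R = Real.log ((n:ℝ) + 1) - R := by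
    rw [← eR, Real.log_mul hR.ne' (Real.exp_pos _).ne', Real.log_exp]; ring
  unfold E Estar
  rw [hw', hR']
  refine ⟨by positivity, by positivity, ?_⟩
  rw [Real.log_div (by positivity) (by positivity), Real.log_div (by positivity) (by positivity),
    Real.log_mul (by positivity) (by positivity), Real.log_mul (by positivity) (by positivity),
    Real.log_exp, Real.log_exp, Real.log_sqrt (by positivity), Real.log_sqrt (by positivity),
    Real.log_pow, lR, Real.log_mul (by positivity) (by positivity),
    Real.log_mul (by positivity) (by positivity), Real.log_mul (by positivity) (by positivity),
    Stirling.log_stirlingSeq_formula, Nat.factorial_succ]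
  push_cast
  rw [Real.log_mul (by positivity) (by positivity), Real.log_mul (by positivity) (by positivity),
    Real.log_div (by positivity) (by positivity), Real.log_exp, add_comm R 1]
  ring

theorem stmt_3 (n : ℕ) (hn : 1 ≤ n) :
    (1 - 1 / (2 * (n : ℝ))) * Estar n ≤ E n ∧ E n ≤ Estar n := by
  have hn1 : (1:ℝ) ≤ n := by exact_mod_cast hn
  have hn0 : (0:ℝ) < n := by linarith
  obtain ⟨hw, ew⟩ := lamW_spec n hn0
  obtain ⟨hR, eR⟩ := lamW_spec (n + 1) (by linarith)
  obtain ⟨hE, hS, hD⟩ := logdiff n hn _ _ hw hR ew eR rfl rfl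
  generalize lambertW (n:ℝ) = w at *
  generalize lambertW ((n:ℝ) + 1) = R at *
  have hwR : w ≤ R := by
    by_contra h
    push Not at h
    have := mul_le_mul h.le (Real.exp_le_exp.mpr h.le) (Real.exp_pos _).le hw.le
    linarith
  obtain ⟨g1, g2⟩ := gbounds n w R hn0 hw hwR ew eR
  have s1 := stirl_lower n
  have s2 := stirl_upper n
  have hexp : 0 < Real.exp w := Real.exp_pos w
  have hd : (R - w) * (Real.exp w * (1 + w)) ≤ 1 := by
    have h1 : Real.exp R = Real.exp w * Real.exp (R - w) := by rw [← Real.exp_add]; ring_nf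
    have h2 : 1 + (R - w) ≤ Real.exp (R - w) := by linarith [Real.add_one_le_exp (R - w)]
    have h3 : R * (Real.exp w * (1 + (R - w))) ≤ n + 1 := by
      rw [← eR, h1]; gcongr
    nlinarith [mul_nonneg hexp.le (sq_nonneg (R - w))]
  constructor
  · have hl : Real.log (1 + R) - Real.log (1 + w) ≤ (R - w) / (1 + w) := by
      rw [← Real.log_div (by positivity) (by positivity)]
      refine (Real.log_le_sub_one_of_pos (by positivity)).trans (le_of_eq ?_)
      field_simp
      ring
    have hl2 : (R - w) / (1 + w) ≤ w / (1 + w) ^ 2 / n := by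
      rw [div_div, div_le_div_iff₀ (by positivity) (by positivity), ← ew]
      have : 0 ≤ w * (1 + w) := by positivity
      nlinarith [mul_le_mul_of_nonneg_left hd this]
    have hexp1 : 1 ≤ Real.exp w := Real.one_le_exp hw.le
    have hd1 : (R - w) * (1 + w) ≤ 1 := by
      have : 0 ≤ (R - w) * (1 + w) := mul_nonneg (by linarith) (by linarith)
      nlinarith
    have hc : R / (1 + R) + w / (1 + w) ^ 2 ≤ 1 := by
      rw [div_add_div _ _ (by positivity) (by positivity), div_le_one (by positivity)]
      nlinarith
    have hc2 : R / (1 + R) / (2 * n) + w / (1 + w) ^ 2 / n / 2 ≤ 1 / (2 * n) := by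
      have : R / (1 + R) / (2 * n) + w / (1 + w) ^ 2 / n / 2 = (R / (1 + R) + w / (1 + w) ^ 2) / (2 * n) := by
        field_simp
      rw [this]
      gcongr
    have hfin : Real.log (Estar n) + -(1 / (2 * (n:ℝ))) ≤ Real.log (E n) := by linarith
    have h := Real.exp_le_exp.mpr hfin
    rw [Real.exp_add, Real.exp_log hE, Real.exp_log hS] at h
    have := Real.add_one_le_exp (-(1 / (2 * (n:ℝ))))
    nlinarith
  · have hw5 : 1 / 5 ≤ w := by
      by_contra h
      push Not at h
      have h1 : Real.exp w ≤ Real.exp 1 := Real.exp_le_exp.mpr (by linarith)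
      have := Real.exp_one_lt_d9
      nlinarith
    have hc : 1 / 6 ≤ w / (1 + w) := by
      rw [div_le_div_iff₀ (by norm_num) (by positivity)]; linarith
    have hc2 : 1 / (12 * ((n:ℝ) + 1)) ≤ w / (1 + w) / (2 * (n + 1)) := by
      have : 1 / (12 * ((n:ℝ) + 1)) = 1 / 6 / (2 * (n + 1)) := by
        field_simp; norm_num
      rw [this]; gcongr
    have hl : Real.log (1 + w) ≤ Real.log (1 + R) := Real.log_le_log (by positivity) (by linarith)
    rw [← Real.log_le_log_iff hE hS]
    linarith
end
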